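/- arXiv:1701.07682 — 2 statements merged into one kernel-verified Lean document; each statement's English description precedes it below -/
import Mathlib

section
/- Let λ be a real number with λ ≥ 2 and let n be a natural number with n ≥ 3. Then the best Markov constant c_n(λ) satisfies n²(n+λ)²/(4(λ+1)(λ+2)) < (c_n(λ))² < n(n+2λ+2)³/((λ+2)(λ+3)). -/
open Polynomial Filter

/-- The weighted `L_2` norm with the Gegenbauer weight `w_lam(t) = (1-t^2)^(lam-1/2)`. -/
noncomputable def gegNorm (lam : ℝ) (f : ℝ → ℝ) : ℝ :=
  (∫ x in (-1:ℝ)..1, (f x) ^ 2 * (1 - x ^ 2) ^ (lam - 1/2)) ^ ((1:ℝ)/2)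

/-- The best Markov constant `c_n(lam)` in `‖p'‖ ≤ c_n(lam) ‖p‖` for polynomials of degree ≤ n. -/
noncomputable def markovConst (lam : ℝ) (n : ℕ) : ℝ :=
  sSup { r : ℝ | ∃ p : Polynomial ℝ, p ≠ 0 ∧ p.natDegree ≤ n ∧
    r = gegNorm lam (fun x => (Polynomial.derivative p).eval x) /
        gegNorm lam (fun x => p.eval x) }

/-- The supersolution condition at index `m`, for values `Qm`, `Q`, `Qp` at `m - 2`, `m`, `m + 2`. -/
lemma supersolution_inequality (l m P N : ℝ) (hl : 2 ≤ l) (hm : 0 ≤ m)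
    (hP : P = ((m + l) ^ 2 - 1) * ((m + l) ^ 2 - (l - 1) ^ 2)) (Qp Q Qm : ℝ)
    (hQ : Q = N - P) (hQ0 : 0 < Q) (hN : 0 < N)
    (hQp : Qp = N - ((m + 2 + l) ^ 2 - 1) * ((m + 2 + l) ^ 2 - (l - 1) ^ 2))
    (hQm : Qm = N - ((m - 2 + l) ^ 2 - 1) * ((m - 2 + l) ^ 2 - (l - 1) ^ 2)) :
    4 * (l + 2) * (l + 3) / N * (m + l) * P * Q ≤
    (m - 1 + l) * (m + 2 * l) * ((m + 2 * l - 1) * Q - (m + 3) * Qp) -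
      m * (m + 1 + l) * ((m + 2 * l - 3) * Qm - (m + 1) * Q) := by
  have hid : (m - 1 + l) * (m + 2 * l) * ((m + 2 * l - 1) * Q - (m + 3) * Qp) -
      m * (m + 1 + l) * ((m + 2 * l - 3) * Qm - (m + 1) * Q) =
      (m + l) * (4 * (l - 1) * (l - 2) * Q + 80 * P +
        (24 * l ^ 2 - 16 * l + 128) * ((m + l) ^ 2 - 1)) := by
    subst hQp hQm hQ hP; ring
  rw [hid, show 4 * (l + 2) * (l + 3) / N * (m + l) * P * Q =
    (m + l) * (4 * (l + 2) * (l + 3) * P * Q / N) by ring]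
  refine mul_le_mul_of_nonneg_left ?_ (by linarith)
  have h1 : 0 ≤ (24 * l ^ 2 - 16 * l + 128) * ((m + l) ^ 2 - 1) := by
    apply mul_nonneg <;> nlinarith
  have h2 : 4 * (l + 2) * (l + 3) * P * Q / N ≤ 4 * (l - 1) * (l - 2) * Q + 80 * P := by
    rw [div_le_iff₀ hN]
    have : N = P + Q := by linarith
    rw [this]
    nlinarith [sq_nonneg ((l - 2) * Q - 4 * P), sq_nonneg P,
      mul_nonneg (sub_nonneg.2 hl) (sq_nonneg Q)]
  linarith

lemma picone_le_sq_sub (r x y : ℝ) (h : 0 < r ∨ y = 0 ∧ r = 0) :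
    (1 - r) * x ^ 2 - (1 / r - 1) * y ^ 2 ≤ (x - y) ^ 2 := by
  rcases h with h | ⟨h, h'⟩
  · have : (x - y) ^ 2 - ((1 - r) * x ^ 2 - (1 / r - 1) * y ^ 2) = (r * x - y) ^ 2 / r := by
      field_simp; ring
    have := div_nonneg (sq_nonneg (r * x - y)) h.le
    linarith
  · subst h h'; simp

lemma sum_weight_mul_sq (l X : ℝ) (hl : 2 ≤ l) (g : ℕ → ℝ)
    (hg : ∀ k : ℕ, ((k : ℝ) + 1) * g (k + 1) = (k + 2 * l) * g k) (j : ℕ) :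
    ∑ m ∈ Finset.range j, ((m : ℝ) + l) * g m * (X - m * (m + 2 * l)) ^ 2 =
      j * g j * (2 * j + 2 * l - 1) / 2 * (X ^ 2 / (2 * l + 1)
        - (2 * X - (2 * l + 1)) * ((j - 1) * (j + 2 * l)) / (2 * l + 3)
        + (j - 2) * (j - 1) * (j + 2 * l + 1) * (j + 2 * l) / (2 * l + 5)) := by
  induction j with
  | zero => simp
  | succ j ih =>
    rw [Finset.sum_range_succ, ih]
    push_cast
    rw [hg j]
    have h1 : 2 * l + 1 ≠ 0 := by linarith
    have h3 : 2 * l + 3 ≠ 0 := by linarith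
    have h5 : 2 * l + 5 ≠ 0 := by linarith
    field_simp
    ring

lemma sum_weight (l : ℝ) (hl : 2 ≤ l) (g : ℕ → ℝ)
    (hg : ∀ k : ℕ, ((k : ℝ) + 1) * g (k + 1) = (k + 2 * l) * g k) (j : ℕ) :
    ∑ m ∈ Finset.range j, ((m : ℝ) + l) * g m = j * g j * (2 * j + 2 * l - 1) / (2 * (2 * l + 1)) := by
  induction j with
  | zero => simp
  | succ j ih =>
    rw [Finset.sum_range_succ, ih]
    push_cast
    rw [hg j]
    have h1 : 2 * l + 1 ≠ 0 := by linarith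
    field_simp
    ring

lemma lower_test_ratio_bound (l n : ℝ) (hl : 2 ≤ l) (hn : 3 ≤ n) :
   n ^ 2 * (n + l) ^ 2 / (4 * (l + 1) * (l + 2)) * (16 * ((n + 2 * l) * (2 * n + 2 * l + 1) / (2 * (2 * l + 1)))) <
     4 * (n * (2 * n + 2 * l - 1) / 2 * ((n * (n + 2 * l)) ^ 2 / (2 * l + 1)
        - (2 * (n * (n + 2 * l)) - (2 * l + 1)) * ((n - 1) * (n + 2 * l)) / (2 * l + 3)
        + (n - 2) * (n - 1) * (n + 2 * l + 1) * (n + 2 * l) / (2 * l + 5))) := by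
  obtain ⟨i, rfl⟩ : ∃ i, n = i + 3 := ⟨n - 3, by ring⟩
  obtain ⟨t, rfl⟩ : ∃ t, l = t + 2 := ⟨l - 2, by ring⟩
  have hi : 0 ≤ i := by linarith
  have ht : 0 ≤ t := by linarith
  rw [← sub_pos]
  have h1 : 0 < 2 * (t + 2) + 1 := by linarith
  have h3 : 0 < 2 * (t + 2) + 3 := by linarith
  have h5 : 0 < 2 * (t + 2) + 5 := by linarith
  have h6 : 0 < (t + 2) + 1 := by linarith
  have h7 : 0 < (t + 2) + 2 := by linarith
  field_simp
  ring_nf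
  positivity

lemma upper_constant_lt (l n : ℝ) (hl : 2 ≤ l) (hn : 3 ≤ n) :
    ((n + 1 + l) ^ 2 - 1) * ((n + 1 + l) ^ 2 - (l - 1) ^ 2) < n * (n + 2 * l + 2) ^ 3 := by
  obtain ⟨i, rfl⟩ : ∃ i, n = i + 3 := ⟨n - 3, by ring⟩
  obtain ⟨t, rfl⟩ : ∃ t, l = t + 2 := ⟨l - 2, by ring⟩
  have hi : 0 ≤ i := by linarith
  have ht : 0 ≤ t := by linarith
  rw [← sub_pos]
  ring_nf
  positivity

/-- The Gegenbauer polynomials, by their three-term recurrence. -/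
noncomputable def gegenbauer (lam : ℝ) : ℕ → ℝ[X]
  | 0 => 1
  | 1 => C (2 * lam) * X
  | k + 2 => C (1 / ((k : ℝ) + 2)) * (2 * ((k : ℝ[X]) + 1 + C lam) * X * gegenbauer lam (k + 1)
      - ((k : ℝ[X]) + 2 * C lam) * gegenbauer lam k)

lemma gegenbauer_recurrence (lam : ℝ) (k : ℕ) :
    ((k : ℝ[X]) + 2) * gegenbauer lam (k + 2) =
      2 * ((k : ℝ[X]) + 1 + C lam) * X * gegenbauer lam (k + 1)
      - ((k : ℝ[X]) + 2 * C lam) * gegenbauer lam k := by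
  have hk : ((k : ℝ[X]) + 2) * C (1 / ((k : ℝ) + 2)) = 1 := by
    rw [show ((k : ℝ[X]) + 2) = C ((k : ℝ) + 2) by
      simp only [map_add, map_natCast, map_ofNat], ← C_mul,
      mul_one_div_cancel (by positivity), C_1]
  rw [gegenbauer, ← mul_assoc, hk, one_mul]

lemma gegenbauer_derivative_pair (lam : ℝ) (k : ℕ) :
    derivative (gegenbauer lam (k + 1)) - X * derivative (gegenbauer lam k) =
        ((k : ℝ[X]) + 2 * C lam) * gegenbauer lam k ∧
    X * derivative (gegenbauer lam (k + 1)) - derivative (gegenbauer lam k) =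
        ((k : ℝ[X]) + 1) * gegenbauer lam (k + 1) := by
  induction k with
  | zero => simp [gegenbauer, map_ofNat C 2]; ring
  | succ k ih =>
    obtain ⟨hA, hB⟩ := ih
    have hrec := gegenbauer_recurrence lam k
    have hd := congrArg derivative hrec
    simp only [derivative_mul, derivative_add, derivative_sub, derivative_natCast,
      derivative_C, derivative_X, derivative_ofNat, derivative_one] at hd
    have hk : ((k : ℝ[X]) + 2) ≠ 0 := by exact_mod_cast (Nat.succ_ne_zero (k + 1))
    have hA' : derivative (gegenbauer lam (k + 2)) - X * derivative (gegenbauer lam (k + 1)) =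
        ((k : ℝ[X]) + 1 + 2 * C lam) * gegenbauer lam (k + 1) := by
      apply mul_left_cancel₀ hk
      linear_combination hd + ((k : ℝ[X]) + 2 * C lam) * hB
    refine ⟨by push_cast; exact hA', ?_⟩
    push_cast
    linear_combination X * hA' - hrec - hA + X * hB

lemma gegenbauer_derivative_sub (lam : ℝ) (k : ℕ) :
    derivative (gegenbauer lam (k + 1)) - derivative (gegenbauer lam (k - 1)) =
      2 * ((k : ℝ[X]) + C lam) * gegenbauer lam k := by
  cases k with
  | zero => simp [gegenbauer, map_ofNat C 2]
  | succ k =>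
    have h1 := (gegenbauer_derivative_pair lam (k + 1)).1
    have h2 := (gegenbauer_derivative_pair lam k).2
    push_cast at *
    linear_combination h1 + h2

lemma gegenbauer_ode (lam : ℝ) (k : ℕ) :
    (1 - X ^ 2) * derivative (derivative (gegenbauer lam k)) -
      (2 * C lam + 1) * X * derivative (gegenbauer lam k) =
      - C ((k : ℝ) * (k + 2 * lam)) * gegenbauer lam k := by
  cases k with
  | zero => simp [gegenbauer]
  | succ k =>
    obtain ⟨hA, hB⟩ := gegenbauer_derivative_pair lam k
    have h : (1 - X ^ 2) * derivative (gegenbauer lam (k + 1)) =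
        ((k : ℝ[X]) + 2 * C lam) * gegenbauer lam k
          - ((k : ℝ[X]) + 1) * X * gegenbauer lam (k + 1) := by
      linear_combination hA - X * hB
    have hd := congrArg derivative h
    simp only [derivative_mul, derivative_add, derivative_sub, derivative_natCast, derivative_X_pow,
      derivative_C, derivative_X, derivative_ofNat, derivative_one] at hd
    simp only [Nat.cast_add, Nat.cast_one, map_mul, map_add, map_natCast, map_one, map_ofNat,
      Nat.add_one_sub_one, pow_one, Nat.cast_ofNat] at hd ⊢
    linear_combination hd - ((k : ℝ[X]) + 2 * C lam) * hB

lemma gegenbauer_degree (lam : ℝ) (hlam : 0 < lam) (k : ℕ) :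
    (gegenbauer lam k).natDegree ≤ k ∧ (gegenbauer lam k).coeff k ≠ 0 := by
  induction k using Nat.twoStepInduction with
  | zero => simp [gegenbauer]
  | one =>
    constructor
    · simpa [gegenbauer] using natDegree_C_mul_le (2 * lam) (X : ℝ[X])
    · simp [gegenbauer, hlam.ne']
  | more k h0 h1 =>
    have e : gegenbauer lam (k + 2) = C (1 / ((k : ℝ) + 2)) *
        (C (2 * ((k : ℝ) + 1 + lam)) * (X * gegenbauer lam (k + 1))
          - C ((k : ℝ) + 2 * lam) * gegenbauer lam k) := by
      simp only [gegenbauer, map_mul, map_add, map_natCast, map_one, map_ofNat]; ring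
    rw [e]
    constructor
    · refine (natDegree_C_mul_le _ _).trans ((natDegree_sub_le _ _).trans (max_le ?_ ?_))
      · refine (natDegree_C_mul_le _ _).trans (natDegree_mul_le.trans ?_)
        have := h1.1
        rw [natDegree_X]; omega
      · exact (natDegree_C_mul_le _ _).trans (h0.1.trans (by omega))
    · have hz : (gegenbauer lam k).coeff (k + 2) = 0 :=
        coeff_eq_zero_of_natDegree_lt (by have := h0.1; omega)
      rw [coeff_C_mul, coeff_sub, coeff_C_mul, coeff_C_mul, hz, coeff_X_mul]
      have : (0 : ℝ) < 2 * ((k : ℝ) + 1 + lam) := by positivity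
      simp only [mul_zero, sub_zero]
      exact mul_ne_zero (by positivity) (mul_ne_zero this.ne' h1.2)

lemma exists_gegenbauer_expansion (lam : ℝ) (hlam : 0 < lam) (n : ℕ) (p : ℝ[X])
    (hp : p.natDegree < n) :
    ∃ a : ℕ → ℝ, (∀ k, n ≤ k → a k = 0) ∧ p = ∑ k ∈ Finset.range n, C (a k) * gegenbauer lam k := by
  induction n generalizing p with
  | zero => omega
  | succ n ih =>
    obtain ⟨hd, hc⟩ := gegenbauer_degree lam hlam n
    set c := p.coeff n / (gegenbauer lam n).coeff n with hcdef
    set q := p - C c * gegenbauer lam n with hq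
    have hqn : q.natDegree ≤ n :=
      (natDegree_sub_le _ _).trans (max_le (by omega) ((natDegree_C_mul_le _ _).trans hd))
    have hq0 : q.coeff n = 0 := by
      rw [hq, coeff_sub, coeff_C_mul, hcdef, div_mul_cancel₀ _ hc, sub_self]
    have hpq : p = q + C c * gegenbauer lam n := by rw [hq]; ring
    rcases Nat.eq_zero_or_pos n with rfl | hn
    · have : q = 0 := by
        rw [eq_C_of_natDegree_le_zero hqn, hq0, C_0]
      refine ⟨fun k => if k = 0 then c else 0, fun k hk => if_neg (by omega), ?_⟩
      rw [hpq, this]; simp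
    · have hlt : q.natDegree < n := by
        refine lt_of_le_of_ne hqn fun h => ?_
        have hlead : q.leadingCoeff = 0 := by rw [leadingCoeff, h, hq0]
        rw [leadingCoeff_eq_zero] at hlead
        rw [hlead, natDegree_zero] at h
        omega
      obtain ⟨a, ha, hsum⟩ := ih q hlt
      refine ⟨fun k => if k = n then c else a k, fun k hk => ?_, ?_⟩
      · simp only [if_neg (show k ≠ n by omega)]
        exact ha k (by omega)
      · rw [Finset.sum_range_succ, hpq, hsum]
        simp only [if_true]
        congr 1
        refine Finset.sum_congr rfl fun k hk => ?_
        rw [if_neg (Finset.mem_range.1 hk).ne]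

/-- Integration against the Gegenbauer weight, as a linear functional on polynomials. -/
noncomputable def gegInt (lam : ℝ) (p : ℝ[X]) : ℝ :=
  ∫ x in (-1:ℝ)..1, p.eval x * (1 - x ^ 2) ^ (lam - 1/2)

lemma continuous_weight (s : ℝ) (hs : 0 ≤ s) : Continuous fun x : ℝ => (1 - x ^ 2) ^ s :=
  Continuous.rpow_const (by fun_prop) fun _ => Or.inr hs

lemma gegInt_intervalIntegrable (lam : ℝ) (hlam : 2 ≤ lam) (p : ℝ[X]) :
    IntervalIntegrable (fun x => p.eval x * (1 - x ^ 2) ^ (lam - 1/2)) MeasureTheory.volume (-1) 1 :=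
  (p.continuous.mul (continuous_weight _ (by linarith))).intervalIntegrable _ _

lemma gegInt_add (lam : ℝ) (hlam : 2 ≤ lam) (p q : ℝ[X]) :
    gegInt lam (p + q) = gegInt lam p + gegInt lam q := by
  rw [gegInt, gegInt, gegInt, ← intervalIntegral.integral_add
    (gegInt_intervalIntegrable lam hlam p) (gegInt_intervalIntegrable lam hlam q)]
  simp only [eval_add, add_mul]

lemma gegInt_C_mul (lam c : ℝ) (p : ℝ[X]) : gegInt lam (C c * p) = c * gegInt lam p := by
  rw [gegInt, gegInt, ← intervalIntegral.integral_const_mul]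
  simp only [eval_mul, eval_C, mul_assoc]

lemma gegInt_sum (lam : ℝ) (hlam : 2 ≤ lam) (n : ℕ) (f : ℕ → ℝ[X]) :
    gegInt lam (∑ k ∈ Finset.range n, f k) = ∑ k ∈ Finset.range n, gegInt lam (f k) := by
  induction n with
  | zero => simp [gegInt]
  | succ n ih => rw [Finset.sum_range_succ, Finset.sum_range_succ, gegInt_add lam hlam, ih]

lemma gegInt_one_pos (lam : ℝ) (hlam : 2 ≤ lam) : 0 < gegInt lam 1 := by
  refine intervalIntegral.intervalIntegral_pos_of_pos_on
    (gegInt_intervalIntegrable lam hlam 1) (fun x hx => ?_) (by norm_num)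
  have : 0 < 1 - x ^ 2 := by nlinarith [hx.1, hx.2]
  rw [eval_one, one_mul]
  exact Real.rpow_pos_of_pos this _

lemma gegInt_sq_nonneg (lam : ℝ) (p : ℝ[X]) : 0 ≤ gegInt lam (p * p) := by
  refine intervalIntegral.integral_nonneg (by norm_num) fun x hx => ?_
  have : 0 ≤ 1 - x ^ 2 := by nlinarith [hx.1, hx.2]
  rw [eval_mul]
  exact mul_nonneg (mul_self_nonneg _) (Real.rpow_nonneg this _)

/-- The integral of the derivative of `(1 - x²)^(lam + 1/2) q` vanishes. -/
lemma gegInt_total_derivative (lam : ℝ) (hlam : 2 ≤ lam) (q : ℝ[X]) :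
    gegInt lam ((1 - X ^ 2) * derivative q - (2 * C lam + 1) * X * q) = 0 := by
  have hder : ∀ x ∈ Set.uIcc (-1 : ℝ) 1,
      HasDerivAt (fun x : ℝ => (1 - x ^ 2) ^ (lam + 1/2) * q.eval x)
        (((1 - X ^ 2) * derivative q - (2 * C lam + 1) * X * q).eval x
          * (1 - x ^ 2) ^ (lam - 1/2)) x := by
    intro x hx
    rw [Set.uIcc_of_le (by norm_num)] at hx
    have hx0 : 0 ≤ 1 - x ^ 2 := by nlinarith [hx.1, hx.2]
    have h1 : HasDerivAt (fun x : ℝ => 1 - x ^ 2) (-(2 * x)) x := by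
      simpa using (hasDerivAt_pow 2 x).const_sub 1
    have h2 := (h1.rpow_const (p := lam + 1/2) (Or.inr (by linarith))).mul (q.hasDerivAt x)
    refine h2.congr_deriv ?_
    have e1 : lam + 1/2 - 1 = lam - 1/2 := by ring
    have e2 : (1 - x ^ 2) ^ (lam + 1/2) = (1 - x ^ 2) ^ (lam - 1/2) * (1 - x ^ 2) := by
      rw [← Real.rpow_add_one' hx0 (by linarith)]; congr 1; ring
    rw [e1, e2]
    simp only [eval_sub, eval_mul, eval_add, eval_one, eval_pow, eval_X, eval_C, eval_ofNat]
    ring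
  rw [gegInt, intervalIntegral.integral_eq_sub_of_hasDerivAt hder
    (gegInt_intervalIntegrable lam hlam _)]
  have : (0 : ℝ) ^ (lam + 1/2) = 0 := Real.zero_rpow (by linarith)
  rw [one_pow, neg_one_sq, sub_self, this, zero_mul, zero_mul, sub_self]

lemma gegenbauer_orthogonal (lam : ℝ) (hlam : 2 ≤ lam) (j k : ℕ) (hjk : j ≠ k) :
    gegInt lam (gegenbauer lam j * gegenbauer lam k) = 0 := by
  set f := gegenbauer lam j with hf
  set g := gegenbauer lam k with hg
  have h := gegInt_total_derivative lam hlam (derivative f * g - f * derivative g)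
  have e : (1 - X ^ 2) * derivative (derivative f * g - f * derivative g)
      - (2 * C lam + 1) * X * (derivative f * g - f * derivative g) =
      C ((k : ℝ) * (k + 2 * lam) - j * (j + 2 * lam)) * (f * g) := by
    have hj := gegenbauer_ode lam j
    have hk := gegenbauer_ode lam k
    rw [← hf] at hj
    rw [← hg] at hk
    simp only [derivative_sub, derivative_mul, C_sub]
    linear_combination g * hj - f * hk
  rw [e, gegInt_C_mul] at h
  refine (mul_eq_zero.1 h).resolve_left fun h0 => ?_
  have h1 : ((k : ℝ) - j) * (k + j + 2 * lam) = 0 := by linear_combination h0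
  rcases mul_eq_zero.1 h1 with h2 | h2
  · exact hjk (by exact_mod_cast (sub_eq_zero.1 h2).symm)
  · have : (0 : ℝ) < k + j + 2 * lam := by positivity
    linarith

/-- The squared norm of the `k`-th Gegenbauer polynomial. -/
noncomputable def gegSq (lam : ℝ) (k : ℕ) : ℝ := gegInt lam (gegenbauer lam k * gegenbauer lam k)

lemma gegSq_succ (lam : ℝ) (hlam : 2 ≤ lam) (k : ℕ) :
    ((k : ℝ) + 1) * ((k + 1 + lam) * gegSq lam (k + 1)) = (k + 2 * lam) * ((k + lam) * gegSq lam k) := by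
  set P := gegenbauer lam with hP
  set t := gegInt lam (X * P k * P (k + 1)) with ht
  have h1 : 2 * ((k : ℝ) + 1 + lam) * t = (k + 2 * lam) * gegSq lam k := by
    have hrec := gegenbauer_recurrence lam k
    have e : C (2 * ((k : ℝ) + 1 + lam)) * (X * P k * P (k + 1)) =
        C ((k : ℝ) + 2) * (P (k + 2) * P k) + C ((k : ℝ) + 2 * lam) * (P k * P k) := by
      simp only [map_mul, map_add, map_natCast, map_one, map_ofNat]
      linear_combination (-P k) * hrec
    have := congrArg (gegInt lam) e
    rwa [gegInt_add lam hlam, gegInt_C_mul, gegInt_C_mul, gegInt_C_mul,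
      gegenbauer_orthogonal lam hlam _ _ (by omega), mul_zero, zero_add] at this
  have h2 : ((k : ℝ) + 1) * gegSq lam (k + 1) = 2 * (k + lam) * t := by
    cases k with
    | zero =>
      have e : P (0 + 1) * P (0 + 1) = C (2 * lam) * (X * P 0 * P (0 + 1)) := by
        simp [hP, gegenbauer]; ring
      rw [gegSq, ← hP, e, gegInt_C_mul]
      simp [ht]
    | succ k =>
      have hrec := gegenbauer_recurrence lam k
      have e : C ((k : ℝ) + 2) * (P (k + 2) * P (k + 2)) + C ((k : ℝ) + 2 * lam) * (P k * P (k + 2)) =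
          C (2 * ((k : ℝ) + 1 + lam)) * (X * P (k + 1) * P (k + 2)) := by
        simp only [map_mul, map_add, map_natCast, map_one, map_ofNat]
        linear_combination P (k + 2) * hrec
      have := congrArg (gegInt lam) e
      rw [gegInt_add lam hlam, gegInt_C_mul, gegInt_C_mul, gegInt_C_mul,
        gegenbauer_orthogonal lam hlam k (k + 2) (by omega), mul_zero, add_zero] at this
      push_cast
      rw [gegSq]
      linear_combination this
  linear_combination (k + 1 + lam) * h2 + (k + lam) * h1

lemma gegSq_pos (lam : ℝ) (hlam : 2 ≤ lam) (k : ℕ) : 0 < gegSq lam k := by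
  induction k with
  | zero => simpa [gegSq, gegenbauer] using gegInt_one_pos lam hlam
  | succ k ih =>
    have h := gegSq_succ lam hlam k
    have hr : 0 < ((k : ℝ) + 2 * lam) * ((k + lam) * gegSq lam k) := by positivity
    rw [← h] at hr
    have h1 : (0 : ℝ) < (k : ℝ) + 1 := by positivity
    have h2 : (0 : ℝ) < (k : ℝ) + 1 + lam := by positivity
    exact pos_of_mul_pos_right (pos_of_mul_pos_right hr h1.le) h2.le

lemma gegInt_sq_sum (lam : ℝ) (hlam : 2 ≤ lam) (a : ℕ → ℝ) (i n : ℕ) :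
    gegInt lam ((∑ k ∈ Finset.range n, C (a k) * gegenbauer lam (k + i)) *
      ∑ k ∈ Finset.range n, C (a k) * gegenbauer lam (k + i)) =
      ∑ k ∈ Finset.range n, a k ^ 2 * gegSq lam (k + i) := by
  rw [Finset.sum_mul, gegInt_sum lam hlam]
  refine Finset.sum_congr rfl fun j hj => ?_
  rw [Finset.mul_sum, gegInt_sum lam hlam, Finset.sum_eq_single_of_mem j hj]
  · rw [show C (a j) * gegenbauer lam (j + i) * (C (a j) * gegenbauer lam (j + i)) =
      C (a j ^ 2) * (gegenbauer lam (j + i) * gegenbauer lam (j + i)) by rw [C_pow]; ring,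
      gegInt_C_mul, gegSq]
  · intro k _ hk
    rw [show C (a j) * gegenbauer lam (j + i) * (C (a k) * gegenbauer lam (k + i)) =
      C (a j * a k) * (gegenbauer lam (j + i) * gegenbauer lam (k + i)) by rw [C_mul]; ring,
      gegInt_C_mul, gegenbauer_orthogonal lam hlam _ _ (by omega), mul_zero]

lemma derivative_gegenbauer_sum (lam : ℝ) (n : ℕ) (S : ℕ → ℝ) (hS : ∀ m, n ≤ m → S m = 0) :
    derivative (∑ m ∈ Finset.range n, C (S m - S (m + 2)) * gegenbauer lam (m + 1)) =
      ∑ m ∈ Finset.range n, C (2 * ((m : ℝ) + lam) * S m) * gegenbauer lam m := by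
  have hshift : ∑ m ∈ Finset.range n, C (S (m + 2)) * derivative (gegenbauer lam (m + 1)) =
      ∑ m ∈ Finset.range n, C (S m) * derivative (gegenbauer lam (m - 1)) := by
    have h0 : derivative (gegenbauer lam 0) = 0 := by simp [gegenbauer]
    have h := Finset.sum_range_succ' (fun m => C (S m) * derivative (gegenbauer lam (m - 1))) (n + 1)
    rw [Finset.sum_range_succ' _ n, Finset.sum_range_succ _ (n + 1), Finset.sum_range_succ _ n,
      hS n le_rfl, hS (n + 1) (by omega)] at h
    simpa [h0] using h.symm
  have hmain : ∀ m ∈ Finset.range n, C (2 * ((m : ℝ) + lam) * S m) * gegenbauer lam m =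
      C (S m) * derivative (gegenbauer lam (m + 1)) - C (S m) * derivative (gegenbauer lam (m - 1)) := by
    intro m _
    simp only [map_mul, map_add, map_natCast, map_ofNat]
    linear_combination (-C (S m)) * gegenbauer_derivative_sub lam m
  rw [Finset.sum_congr rfl hmain, Finset.sum_sub_distrib, ← hshift, ← Finset.sum_sub_distrib,
    derivative_sum]
  refine Finset.sum_congr rfl fun m _ => ?_
  rw [derivative_C_mul, C_sub, sub_mul]

/-- The quadratic sequence `S` is a test sequence for the lower estimate. -/
lemma discrete_test_lt (l : ℝ) (hl : 2 ≤ l) (n : ℕ) (hn : 3 ≤ n) (h : ℕ → ℝ) (hpos : ∀ k, 0 < h k)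
    (hh : ∀ k : ℕ, ((k : ℝ) + 1) * ((k + 1 + l) * h (k + 1)) = (k + 2 * l) * ((k + l) * h k))
    (S : ℕ → ℝ) (hS : ∀ m, S m = if m < n then n * (n + 2 * l) - m * (m + 2 * l) else 0) :
    (n : ℝ) ^ 2 * (n + l) ^ 2 / (4 * (l + 1) * (l + 2)) *
        ∑ m ∈ Finset.range n, (S m - S (m + 2)) ^ 2 * h (m + 1) <
      ∑ m ∈ Finset.range n, (2 * ((m : ℝ) + l) * S m) ^ 2 * h m := by
  set g : ℕ → ℝ := fun k => (k + l) * h k with hgdef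
  have hg : ∀ k : ℕ, ((k : ℝ) + 1) * g (k + 1) = (k + 2 * l) * g k := by
    intro k; simp only [hgdef]; push_cast; exact hh k
  have hgpos : ∀ k, 0 < g k := fun k => mul_pos (by positivity) (hpos k)
  have hn3 : (3 : ℝ) ≤ n := by exact_mod_cast hn
  have hnum : ∑ m ∈ Finset.range n, (2 * ((m : ℝ) + l) * S m) ^ 2 * h m =
      4 * ∑ m ∈ Finset.range n, ((m : ℝ) + l) * g m * (n * (n + 2 * l) - m * (m + 2 * l)) ^ 2 := by
    rw [Finset.mul_sum]
    refine Finset.sum_congr rfl fun m hm => ?_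
    rw [hS m, if_pos (Finset.mem_range.1 hm)]
    simp only [hgdef]
    ring
  have hden : ∑ m ∈ Finset.range n, (S m - S (m + 2)) ^ 2 * h (m + 1) ≤
      16 * ((n + 2 * l) * (2 * n + 2 * l + 1) / (2 * (2 * l + 1))) * g n := by
    have hterm : ∀ m ∈ Finset.range n, (S m - S (m + 2)) ^ 2 * h (m + 1) ≤
        16 * ((((m + 1 : ℕ) : ℝ) + l) * g (m + 1)) := by
      intro m hm
      have hmn := Finset.mem_range.1 hm
      have hm0 : (0 : ℝ) ≤ m := m.cast_nonneg
      have hd : 0 ≤ S m - S (m + 2) ∧ S m - S (m + 2) ≤ 4 * (m + 1 + l) := by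
        rw [hS m, if_pos hmn, hS (m + 2)]
        have h1 : (m : ℝ) + 1 ≤ n := by exact_mod_cast hmn
        by_cases h2 : m + 2 < n
        · rw [if_pos h2]; push_cast; constructor <;> nlinarith
        · rw [if_neg h2]
          have h3 : (n : ℝ) ≤ m + 2 := by exact_mod_cast not_lt.1 h2
          constructor <;> nlinarith
      have h4 : (S m - S (m + 2)) ^ 2 ≤ (4 * (m + 1 + l)) ^ 2 := pow_le_pow_left₀ hd.1 hd.2 2
      calc _ ≤ (4 * (m + 1 + l)) ^ 2 * h (m + 1) := mul_le_mul_of_nonneg_right h4 (hpos _).le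
        _ = _ := by simp only [hgdef]; push_cast; ring
    refine (Finset.sum_le_sum hterm).trans ?_
    rw [← Finset.mul_sum]
    have h1 := sum_weight l hl g hg (n + 1)
    rw [Finset.sum_range_succ'] at h1
    have h2 : 0 < (((0 : ℕ) : ℝ) + l) * g 0 := mul_pos (by simp; linarith) (hgpos 0)
    have h3 : (((n + 1 : ℕ) : ℝ)) * g (n + 1) = (n + 2 * l) * g n := by push_cast; exact hg n
    rw [h3] at h1
    push_cast at h1 h2 ⊢
    have h4 : (n + 2 * l) * g n * (2 * (n + 1) + 2 * l - 1) / (2 * (2 * l + 1)) =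
      (n + 2 * l) * (2 * n + 2 * l + 1) / (2 * (2 * l + 1)) * g n := by ring
    rw [h4] at h1
    linarith
  rw [hnum, sum_weight_mul_sq l _ hl g hg n]
  refine (mul_le_mul_of_nonneg_left hden (by positivity)).trans_lt ?_
  have := mul_lt_mul_of_pos_right (lower_test_ratio_bound l n hl hn3) (hgpos n)
  calc _ = _ := by ring
    _ < _ := this
    _ = _ := by ring

set_option maxHeartbeats 1000000 in
/-- A discrete Hardy inequality, proved by comparison with a positive supersolution. -/
lemma discrete_hardy_le (l : ℝ) (hl : 2 ≤ l) (n : ℕ) (h : ℕ → ℝ) (hpos : ∀ k, 0 < h k)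
    (hh : ∀ k : ℕ, ((k : ℝ) + 1) * ((k + 1 + l) * h (k + 1)) = (k + 2 * l) * ((k + l) * h k))
    (S : ℕ → ℝ) (hS : ∀ m, n ≤ m → S m = 0) :
    ∑ m ∈ Finset.range n, (2 * ((m : ℝ) + l) * S m) ^ 2 * h m ≤
      ((n + 1 + l) ^ 2 - 1) * ((n + 1 + l) ^ 2 - (l - 1) ^ 2) / ((l + 2) * (l + 3)) *
        ∑ m ∈ Finset.range n, (S m - S (m + 2)) ^ 2 * h (m + 1) := by
  set P : ℝ → ℝ := fun m => ((m + l) ^ 2 - 1) * ((m + l) ^ 2 - (l - 1) ^ 2) with hPdef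
  have hmono : ∀ a b : ℝ, -1 ≤ a → a < b → P a < P b := by
    intro a b ha hab
    have h1 : (a + l) ^ 2 < (b + l) ^ 2 := by nlinarith
    have h2 : 0 ≤ (a + l) ^ 2 - (l - 1) ^ 2 := by nlinarith
    have h3 : 0 ≤ (a + l) ^ 2 - 1 := by nlinarith
    simp only [hPdef]
    nlinarith
  set N : ℝ := P (n + 1) with hNdef
  have hn0 : (0 : ℝ) ≤ n := n.cast_nonneg
  have hN : 0 < N := by
    have h1 := hmono (-1) (n + 1) le_rfl (by linarith)
    have h2 : P (-1) = 0 := by simp only [hPdef]; ring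
    linarith
  have hQ0 : ∀ m : ℕ, m ≤ n → 0 < N - P m := fun m hm => by
    have h1 : (m : ℝ) ≤ n := by exact_mod_cast hm
    have := hmono m (n + 1) (by linarith [m.cast_nonneg (α := ℝ)]) (by linarith)
    linarith
  set e : ℕ → ℝ := fun m => h m * (m * (m + l) / ((m + 2 * l - 1) * (m + l - 1))) *
    ((m + 2 * l - 3) * (N - P (m - 2)) / ((m + 1) * (N - P m)) - 1) with hedef
  have hterm : ∀ m ∈ Finset.range n,
      (l + 2) * (l + 3) / N * ((2 * ((m : ℝ) + l) * S m) ^ 2 * h m)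
        + (e m * S m ^ 2 - e (m + 2) * S (m + 2) ^ 2) ≤ (S m - S (m + 2)) ^ 2 * h (m + 1) := by
    intro m hm
    have hmn := Finset.mem_range.1 hm
    have hm0 : (0 : ℝ) ≤ m := m.cast_nonneg
    have hQ := hQ0 m hmn.le
    set r : ℝ := (m + 3) * (N - P (m + 2)) / ((m + 2 * l - 1) * (N - P m)) with hr
    have hr0 : 0 < r ∨ S (m + 2) = 0 ∧ r = 0 := by
      rcases Nat.lt_or_ge (m + 1) n with h1 | h1
      · left
        have h2 := hQ0 (m + 2) h1
        push_cast at h2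
        have : 0 < (m : ℝ) + 2 * l - 1 := by linarith
        positivity
      · right
        have h2 : n = m + 1 := by omega
        refine ⟨hS _ (by omega), ?_⟩
        have : N = P (m + 2) := by rw [hNdef, h2]; push_cast; congr 1; ring
        rw [hr, this, sub_self, mul_zero, zero_div]
    have hh' : h (m + 1) = (m + 2 * l) * (m + l) / ((m + 1) * (m + 1 + l)) * h m := by
      rw [div_mul_eq_mul_div, eq_div_iff (by positivity)]
      linear_combination hh m
    have he2 : e (m + 2) = h (m + 1) * (1 / r - 1) := by
      have hh2 : h (m + 2) = (m + 1 + 2 * l) * (m + 1 + l) / ((m + 2) * (m + 2 + l)) * h (m + 1) := by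
        rw [div_mul_eq_mul_div, eq_div_iff (by positivity)]
        have := hh (m + 1)
        push_cast at this
        linear_combination this
      have e1 : ((m : ℝ) + 2) * (m + 2 + l) / ((m + 2 + 2 * l - 1) * (m + 2 + l - 1)) *
          ((m + 1 + 2 * l) * (m + 1 + l) / ((m + 2) * (m + 2 + l))) = 1 := by
        rw [show (m : ℝ) + 2 + 2 * l - 1 = m + 1 + 2 * l by ring,
          show (m : ℝ) + 2 + l - 1 = m + 1 + l by ring]
        field_simp
      have e2 : 1 / r = (m + 2 + 2 * l - 3) * (N - P m) / ((m + 2 + 1) * (N - P (m + 2))) := by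
        rw [hr, one_div_div]
        congr 2 <;> ring
      simp only [hedef]
      push_cast
      rw [hh2, e2, show (m : ℝ) + 2 - 2 = m by ring]
      linear_combination (h (m + 1) * ((m + 2 + 2 * l - 3) * (N - P m) /
        ((m + 2 + 1) * (N - P (m + 2))) - 1)) * e1
    have hpic := mul_le_mul_of_nonneg_right (picone_le_sq_sub r (S m) (S (m + 2)) hr0) (hpos (m + 1)).le
    have hcore := supersolution_inequality l m (P m) N hl hm0 rfl (N - P (m + 2)) (N - P m) (N - P (m - 2)) rfl
      hQ hN rfl rfl
    have hcoef : (l + 2) * (l + 3) / N * (4 * (m + l) ^ 2 * h m) + e m ≤ (1 - r) * h (m + 1) := by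
      set Q := N - P m with hQd
      set Qp := N - P (m + 2) with hQpd
      set Qm := N - P (m - 2) with hQmd
      have d1 : 0 < (m : ℝ) + 2 * l - 1 := by linarith
      have d2 : 0 < (m : ℝ) + l - 1 := by linarith
      have d3 : 0 < (m : ℝ) + 1 := by linarith
      have d4 : 0 < (m : ℝ) + 1 + l := by linarith
      have hPm : P m = (m + l - 1) * (m + l + 1) * ((m + 1) * (m + 2 * l - 1)) := by
        simp only [hPdef]; ring
      have key : (1 - r) * h (m + 1) - ((l + 2) * (l + 3) / N * (4 * (m + l) ^ 2 * h m) + e m) =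
          h m * (m + l) / ((m + 2 * l - 1) * (m + l - 1) * (m + 1) * (m + 1 + l) * Q) *
          (((m - 1 + l) * (m + 2 * l) * ((m + 2 * l - 1) * Q - (m + 3) * Qp) -
          m * (m + 1 + l) * ((m + 2 * l - 3) * Qm - (m + 1) * Q)) -
          4 * (l + 2) * (l + 3) / N * (m + l) * P m * Q) := by
        rw [hPm, hh', hr]
        simp only [hedef, ← hQd, ← hQmd]
        field_simp
        ring
      have := mul_nonneg (show 0 ≤ h m * (m + l) /
        ((m + 2 * l - 1) * (m + l - 1) * (m + 1) * (m + 1 + l) * Q) by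
          have := hpos m
          positivity) (sub_nonneg.2 hcore)
      linarith
    have := mul_le_mul_of_nonneg_right hcoef (sq_nonneg (S m))
    rw [he2]
    calc _ = ((l + 2) * (l + 3) / N * (4 * (m + l) ^ 2 * h m) + e m) * S m ^ 2
          - h (m + 1) * (1 / r - 1) * S (m + 2) ^ 2 := by ring
      _ ≤ (1 - r) * h (m + 1) * S m ^ 2 - h (m + 1) * (1 / r - 1) * S (m + 2) ^ 2 := by linarith
      _ ≤ _ := by linarith
  have htel : ∑ m ∈ Finset.range n, (e m * S m ^ 2 - e (m + 2) * S (m + 2) ^ 2) =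
      e 0 * S 0 ^ 2 + e 1 * S 1 ^ 2 := by
    have h1 : ∀ j : ℕ, ∑ m ∈ Finset.range j, (e m * S m ^ 2 - e (m + 2) * S (m + 2) ^ 2) =
        e 0 * S 0 ^ 2 + e 1 * S 1 ^ 2 - e j * S j ^ 2 - e (j + 1) * S (j + 1) ^ 2 := by
      intro j
      induction j with
      | zero => simp
      | succ j ih => rw [Finset.sum_range_succ, ih]; ring
    rw [h1, hS n le_rfl, hS (n + 1) (by omega)]
    ring
  have he0 : e 0 = 0 := by simp [hedef]
  have he1 : 0 ≤ e 1 * S 1 ^ 2 := by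
    rcases Nat.lt_or_ge 1 n with h1 | h1
    · refine mul_nonneg ?_ (sq_nonneg _)
      have hQ := hQ0 1 h1.le
      have hP1 : P (1 - 2) = 0 := by simp only [hPdef]; ring
      have hP2 := hmono (1 - 2) 1 (by norm_num) (by norm_num)
      simp only [hedef]
      push_cast at hQ ⊢
      have d1 : 0 < 1 + 2 * l - 1 := by linarith
      have d2 : 0 < 1 + l - 1 := by linarith
      have := hpos 1
      refine mul_nonneg (by positivity) (sub_nonneg.2 ?_)
      rw [le_div_iff₀ (by positivity)]
      nlinarith
    · simp [hS 1 h1]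
  have hsum := Finset.sum_le_sum hterm
  rw [Finset.sum_add_distrib, htel, he0, ← Finset.mul_sum] at hsum
  have hN' : N = ((n + 1 + l) ^ 2 - 1) * ((n + 1 + l) ^ 2 - (l - 1) ^ 2) := rfl
  rw [← hN']
  have h5 : (l + 2) * (l + 3) / N * ∑ m ∈ Finset.range n, (2 * ((m : ℝ) + l) * S m) ^ 2 * h m ≤
      ∑ m ∈ Finset.range n, (S m - S (m + 2)) ^ 2 * h (m + 1) := by linarith
  rw [div_mul_eq_mul_div, div_le_iff₀ hN] at h5
  rw [div_mul_eq_mul_div, le_div_iff₀ (by positivity)]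
  linarith

lemma gegNorm_eval (lam : ℝ) (p : ℝ[X]) :
    gegNorm lam (fun x => p.eval x) = √(gegInt lam (p * p)) := by
  simp only [gegNorm, Real.sqrt_eq_rpow, gegInt, eval_mul, sq]

lemma gegInt_derivative_sq_le (lam : ℝ) (hlam : 2 ≤ lam) (n : ℕ) (p : ℝ[X]) (hp : p.natDegree ≤ n) :
    gegInt lam (derivative p * derivative p) ≤
      ((n + 1 + lam) ^ 2 - 1) * ((n + 1 + lam) ^ 2 - (lam - 1) ^ 2) / ((lam + 2) * (lam + 3)) *
        gegInt lam (p * p) := by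
  obtain ⟨a, ha, hpa⟩ := exists_gegenbauer_expansion lam (by linarith) (n + 1) p (by omega)
  set S : ℕ → ℝ := fun m => ∑ j ∈ Finset.range n, a (m + 1 + 2 * j) with hSdef
  have hS : ∀ m, n ≤ m → S m = 0 := fun m hm =>
    Finset.sum_eq_zero fun j _ => ha _ (by omega)
  have hSa : ∀ m, S m - S (m + 2) = a (m + 1) := by
    intro m
    have h1 := Finset.sum_range_succ (fun j => a (m + 1 + 2 * j)) n
    rw [Finset.sum_range_succ'] at h1
    have h2 : ∑ j ∈ Finset.range n, a (m + 1 + 2 * (j + 1)) = S (m + 2) :=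
      Finset.sum_congr rfl fun j _ => by congr 1; ring
    rcases Nat.eq_zero_or_pos n with h0 | h0
    · subst h0
      simp only [hSdef, Finset.range_zero, Finset.sum_empty, sub_self]
      exact (ha _ (by omega)).symm
    · rw [h2, ha (m + 1 + 2 * n) (by omega)] at h1
      simp only [mul_zero, add_zero] at h1
      simp only [hSdef] at h1 ⊢
      linarith
  have hder : derivative p = ∑ m ∈ Finset.range n, C (2 * ((m : ℝ) + lam) * S m) * gegenbauer lam m := by
    rw [← derivative_gegenbauer_sum lam n S hS, hpa, Finset.sum_range_succ', derivative_add,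
      derivative_C_mul]
    simp only [hSa, gegenbauer, derivative_one, mul_zero, add_zero]
  have h1 := gegInt_sq_sum lam hlam (fun m => 2 * ((m : ℝ) + lam) * S m) 0 n
  have h2 := gegInt_sq_sum lam hlam a 0 (n + 1)
  simp only [add_zero] at h1 h2
  rw [← hder] at h1
  rw [← hpa, Finset.sum_range_succ'] at h2
  have h3 := discrete_hardy_le lam hlam n (gegSq lam) (gegSq_pos lam hlam) (gegSq_succ lam hlam) S hS
  simp only [hSa] at h3
  rw [h1, h2]
  refine h3.trans (mul_le_mul_of_nonneg_left ?_ ?_)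
  · have := gegSq_pos lam hlam 0
    have : 0 ≤ a 0 ^ 2 * gegSq lam 0 := by positivity
    linarith
  · have hn0 : (0 : ℝ) ≤ n := n.cast_nonneg
    refine div_nonneg (mul_nonneg ?_ ?_) (by positivity) <;> nlinarith

lemma exists_lt_gegInt_derivative_sq (lam : ℝ) (hlam : 2 ≤ lam) (n : ℕ) (hn : 3 ≤ n) :
    ∃ p : ℝ[X], p.natDegree ≤ n ∧ 0 < gegInt lam (p * p) ∧
      (n : ℝ) ^ 2 * (n + lam) ^ 2 / (4 * (lam + 1) * (lam + 2)) * gegInt lam (p * p) <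
        gegInt lam (derivative p * derivative p) := by
  set S : ℕ → ℝ := fun m => if m < n then n * (n + 2 * lam) - m * (m + 2 * lam) else 0 with hSdef
  have hS : ∀ m, n ≤ m → S m = 0 := fun m hm => if_neg (by omega)
  refine ⟨∑ m ∈ Finset.range n, C (S m - S (m + 2)) * gegenbauer lam (m + 1), ?_, ?_, ?_⟩
  · refine natDegree_sum_le_of_forall_le _ _ fun m hm => ?_
    have h1 := (gegenbauer_degree lam (by linarith) (m + 1)).1
    have h2 := Finset.mem_range.1 hm
    exact (natDegree_C_mul_le _ _).trans (by omega)
  · rw [gegInt_sq_sum lam hlam (fun m => S m - S (m + 2)) 1 n]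
    refine Finset.sum_pos' (fun m _ => ?_) ⟨0, Finset.mem_range.2 (by omega), ?_⟩
    · have := gegSq_pos lam hlam (m + 1)
      positivity
    · refine mul_pos (pow_pos ?_ 2) (gegSq_pos lam hlam _)
      simp only [hSdef, if_pos (show 0 < n by omega), if_pos (show 0 + 2 < n by omega)]
      push_cast
      nlinarith
  · have h1 := gegInt_sq_sum lam hlam (fun m => 2 * ((m : ℝ) + lam) * S m) 0 n
    simp only [add_zero] at h1
    rw [derivative_gegenbauer_sum lam n S hS, h1,
      gegInt_sq_sum lam hlam (fun m => S m - S (m + 2)) 1 n]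
    exact discrete_test_lt lam hlam n hn (gegSq lam) (gegSq_pos lam hlam) (gegSq_succ lam hlam) S
      fun _ => rfl

theorem markov_bounds_large_lambda (lam : ℝ) (hlam : 2 ≤ lam) (n : ℕ) (hn : 3 ≤ n) :
    (n : ℝ)^2 * ((n : ℝ) + lam)^2 / (4 * (lam + 1) * (lam + 2)) < (markovConst lam n)^2 ∧
    (markovConst lam n)^2 < (n : ℝ) * ((n : ℝ) + 2*lam + 2)^3 / ((lam + 2) * (lam + 3)) := by
  have hn3 : (3 : ℝ) ≤ n := by exact_mod_cast hn
  set K : ℝ := ((n + 1 + lam) ^ 2 - 1) * ((n + 1 + lam) ^ 2 - (lam - 1) ^ 2) /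
    ((lam + 2) * (lam + 3)) with hK
  have hK0 : 0 ≤ K := by
    refine div_nonneg (mul_nonneg ?_ ?_) (by positivity) <;> nlinarith
  have hle : ∀ r ∈ { r : ℝ | ∃ p : Polynomial ℝ, p ≠ 0 ∧ p.natDegree ≤ n ∧
      r = gegNorm lam (fun x => (Polynomial.derivative p).eval x) /
        gegNorm lam (fun x => p.eval x) }, r ≤ √K := by
    rintro r ⟨p, -, hp, rfl⟩
    rw [gegNorm_eval, gegNorm_eval]
    refine div_le_of_le_mul₀ (Real.sqrt_nonneg _) (Real.sqrt_nonneg _) ?_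
    rw [← Real.sqrt_mul hK0]
    exact Real.sqrt_le_sqrt (gegInt_derivative_sq_le lam hlam n p hp)
  obtain ⟨p, hp, hpos, hlt⟩ := exists_lt_gegInt_derivative_sq lam hlam n hn
  have hp0 : p ≠ 0 := by
    rintro rfl
    simp [gegInt] at hpos
  have hmem : √(gegInt lam (derivative p * derivative p)) / √(gegInt lam (p * p)) ∈
      { r : ℝ | ∃ p : Polynomial ℝ, p ≠ 0 ∧ p.natDegree ≤ n ∧
      r = gegNorm lam (fun x => (Polynomial.derivative p).eval x) /
        gegNorm lam (fun x => p.eval x) } :=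
    ⟨p, hp0, hp, by rw [gegNorm_eval, gegNorm_eval]⟩
  have hge : √(gegInt lam (derivative p * derivative p)) / √(gegInt lam (p * p)) ≤
      markovConst lam n := le_csSup ⟨_, hle⟩ hmem
  have hup : markovConst lam n ≤ √K := csSup_le ⟨_, hmem⟩ hle
  have hr0 : 0 ≤ √(gegInt lam (derivative p * derivative p)) / √(gegInt lam (p * p)) := by
    positivity
  constructor
  · refine lt_of_lt_of_le ?_ (pow_le_pow_left₀ hr0 hge 2)
    rw [div_pow, Real.sq_sqrt (gegInt_sq_nonneg lam _), Real.sq_sqrt hpos.le, lt_div_iff₀ hpos]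
    exact hlt
  · refine (pow_le_pow_left₀ (hr0.trans hge) hup 2).trans_lt ?_
    rw [Real.sq_sqrt hK0]
    exact div_lt_div_of_pos_right (upper_constant_lt lam n hlam hn3) (by positivity)
end

section
/- Let λ be a real number with λ > -1/2, let n be a natural number with n ≥ 3, and set λ' = min{0,λ} and λ'' = max{0,λ}. Then the best Markov constant c_n(λ) satisfies (n+λ)²(n+2λ')²/((2λ+1)(2λ+5)) < (c_n(λ))² < (n+λ+λ''+2)⁴/(2(2λ+1)√(2λ+5)). -/
open Polynomial Filter

/-- A positive definite functional on polynomials satisfying the integration by parts rule of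
the Gegenbauer weight. -/
structure IsGegenbauerFunctional (lam : ℝ) (L : ℝ[X] →ₗ[ℝ] ℝ) : Prop where
  parts : ∀ f : ℝ[X], L ((1 - X ^ 2) * derivative f - C (2 * lam + 1) * X * f) = 0
  pos : ∀ p : ℝ[X], p ≠ 0 → 0 < L (p ^ 2)

theorem gegWeight_intervalIntegrable {a : ℝ} (ha : -1 < a) :
    IntervalIntegrable (fun x : ℝ => (1 - x ^ 2) ^ a) MeasureTheory.volume (-1) 1 := by
  have left : IntervalIntegrable (fun x : ℝ => (1 - x ^ 2) ^ a) MeasureTheory.volume (-1) 0 := by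
    have h1 : IntervalIntegrable (fun x : ℝ => (1 + x) ^ a) MeasureTheory.volume (-1) 0 := by
      have := (intervalIntegral.intervalIntegrable_rpow' (a := 0) (b := 1) ha).comp_add_left 1
      simpa using this
    have h2 : ContinuousOn (fun x : ℝ => (1 - x) ^ a) (Set.uIcc (-1) 0) := by
      refine ContinuousOn.rpow_const (by fun_prop) fun x hx => Or.inl ?_
      rw [Set.uIcc_of_le (by norm_num)] at hx
      linarith [hx.2]
    refine (h1.mul_continuousOn h2).congr fun x hx => ?_
    rw [Set.uIoc_of_le (by norm_num)] at hx
    change (1 + x) ^ a * (1 - x) ^ a = (1 - x ^ 2) ^ a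
    rw [← Real.mul_rpow (by linarith [hx.1]) (by linarith [hx.2])]
    ring_nf
  refine left.trans ?_
  have := ((IntervalIntegrable.iff_comp_neg).1 left).symm
  simpa using this

theorem exists_gegenbauerFunctional {lam : ℝ} (hlam : -(1 / 2 : ℝ) < lam) :
    ∃ L : ℝ[X] →ₗ[ℝ] ℝ,
      (∀ p : ℝ[X], L p = ∫ x in (-1 : ℝ)..1, p.eval x * (1 - x ^ 2) ^ (lam - 1 / 2)) ∧
      IsGegenbauerFunctional lam L := by
  have hintegrable : ∀ p : ℝ[X], IntervalIntegrable
      (fun x : ℝ => p.eval x * (1 - x ^ 2) ^ (lam - 1 / 2)) MeasureTheory.volume (-1) 1 :=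
    fun p => (gegWeight_intervalIntegrable (by linarith)).continuousOn_mul p.continuousOn
  let L : ℝ[X] →ₗ[ℝ] ℝ :=
    { toFun := fun p => ∫ x in (-1 : ℝ)..1, p.eval x * (1 - x ^ 2) ^ (lam - 1 / 2)
      map_add' := fun p q => by
        rw [← intervalIntegral.integral_add (hintegrable p) (hintegrable q)]
        simp only [eval_add, add_mul]
      map_smul' := fun c p => by
        simp only [eval_smul, smul_eq_mul, RingHom.id_apply, mul_assoc]
        rw [intervalIntegral.integral_const_mul] }
  have hL : ∀ p : ℝ[X], L p = ∫ x in (-1 : ℝ)..1, p.eval x * (1 - x ^ 2) ^ (lam - 1 / 2) :=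
    fun p => rfl
  refine ⟨L, hL, ⟨fun f => ?_, fun p hp => ?_⟩⟩
  · rw [hL]
    have hcont : ContinuousOn (fun x : ℝ => (1 - x ^ 2) ^ (lam + 1 / 2) * f.eval x)
        (Set.Icc (-1) 1) := by
      refine ContinuousOn.mul ?_ f.continuousOn
      exact ContinuousOn.rpow_const (by fun_prop) fun x _ => Or.inr (by linarith)
    rw [intervalIntegral.integral_eq_sub_of_hasDerivAt_of_le (by norm_num) hcont ?_ (hintegrable _)]
    · have h0 : lam + 1 / 2 ≠ 0 := by linarith
      norm_num [Real.zero_rpow, h0]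
    · intro x hx
      have hx1 : 0 < 1 - x ^ 2 := by nlinarith [hx.1, hx.2]
      have h1 : HasDerivAt (fun x : ℝ => 1 - x ^ 2) (-(2 * x)) x := by
        simpa using (hasDerivAt_pow 2 x).const_sub 1
      have h2 := (h1.rpow_const (p := lam + 1 / 2) (Or.inl hx1.ne')).mul (f.hasDerivAt x)
      refine HasDerivAt.congr_deriv h2 ?_
      have e1 : lam + 1 / 2 = (lam - 1 / 2) + 1 := by ring
      have e2 : lam + 1 / 2 - 1 = lam - 1 / 2 := by ring
      rw [e2, e1, Real.rpow_add hx1, Real.rpow_one]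
      simp only [eval_sub, eval_mul, eval_one, eval_pow, eval_X, eval_C]
      ring
  · rw [hL, intervalIntegral.integral_pos_iff_support_of_nonneg_ae' ?_ (hintegrable _)]
    · refine ⟨by norm_num, ?_⟩
      have hsub : Set.Ioo (-1 : ℝ) 1 \ (p.roots.toFinset : Set ℝ) ⊆
          (Function.support fun x : ℝ => (p ^ 2).eval x * (1 - x ^ 2) ^ (lam - 1 / 2)) ∩
            Set.Ioc (-1) 1 := by
        rintro x ⟨hx, hxr⟩
        refine ⟨?_, hx.1, hx.2.le⟩
        have hx1 : 0 < 1 - x ^ 2 := by nlinarith [hx.1, hx.2]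
        have : p.eval x ≠ 0 := fun h => hxr (by simp [hp, h])
        simp only [Function.mem_support, eval_pow]
        exact mul_ne_zero (pow_ne_zero _ this) (Real.rpow_pos_of_pos hx1 _).ne'
      refine lt_of_lt_of_le ?_ (MeasureTheory.measure_mono hsub)
      rw [MeasureTheory.measure_sdiff_null (Finset.measure_zero _ _)]
      simp
    · rw [Set.uIoc_of_le (by norm_num)]
      refine (MeasureTheory.ae_restrict_iff' measurableSet_Ioc).2 (Eventually.of_forall ?_)
      intro x hx
      have hx1 : 0 ≤ 1 - x ^ 2 := by nlinarith [hx.1, hx.2]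
      simp only [Pi.zero_apply, eval_pow]
      exact mul_nonneg (sq_nonneg _) (Real.rpow_nonneg hx1 _)

/-- Gegenbauer polynomials, divided by the parameter in positive degrees so that the value
`lam = 0` is not degenerate. -/
noncomputable def geg (lam : ℝ) : ℕ → ℝ[X]
  | 0 => 1
  | 1 => C 2 * X
  | k + 2 => C (1 / ((k : ℝ) + 2)) * (C ((k : ℝ) + 1 + 2 * lam) * X * geg lam (k + 1) -
      (1 - X ^ 2) * derivative (geg lam (k + 1)))

theorem geg_raise (lam : ℝ) (k : ℕ) :
    C ((k : ℝ) + 2) * geg lam (k + 2) = C ((k : ℝ) + 1 + 2 * lam) * X * geg lam (k + 1) -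
      (1 - X ^ 2) * derivative (geg lam (k + 1)) := by
  have h : ((k : ℝ) + 2) ≠ 0 := by positivity
  rw [geg, ← mul_assoc, ← C_mul, mul_one_div_cancel h, C_1, one_mul]

theorem geg_derivative_of_ode {lam : ℝ} {k : ℕ}
    (ode : (1 - X ^ 2) * derivative (derivative (geg lam (k + 1))) -
      C (2 * lam + 1) * X * derivative (geg lam (k + 1)) +
      C (((k : ℝ) + 1) * ((k : ℝ) + 1 + 2 * lam)) * geg lam (k + 1) = 0) :
    derivative (geg lam (k + 2)) =
      X * derivative (geg lam (k + 1)) + C ((k : ℝ) + 1 + 2 * lam) * geg lam (k + 1) := by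
  have h : C ((k : ℝ) + 2) ≠ 0 := by
    rw [Ne, C_eq_zero]
    positivity
  apply mul_left_cancel₀ h
  have hd := congrArg derivative (geg_raise lam k)
  simp only [derivative_mul, derivative_C, derivative_sub, derivative_one, derivative_X_pow,
    derivative_X, zero_mul, zero_add] at hd
  rw [hd]
  simp only [C_add, C_mul, map_natCast, C_1, map_ofNat, Nat.cast_ofNat] at ode ⊢
  linear_combination -ode

theorem geg_ode_succ (lam : ℝ) (k : ℕ) :
    (1 - X ^ 2) * derivative (derivative (geg lam (k + 1))) -
      C (2 * lam + 1) * X * derivative (geg lam (k + 1)) +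
      C (((k : ℝ) + 1) * ((k : ℝ) + 1 + 2 * lam)) * geg lam (k + 1) = 0 := by
  induction k with
  | zero =>
    simp only [geg, derivative_mul, derivative_X, C_add, C_mul, map_natCast, C_1, map_ofNat]
    simp
    ring
  | succ k ih =>
    have hd := geg_derivative_of_ode ih
    have hr := geg_raise lam k
    rw [hd]
    simp only [derivative_add, derivative_mul, derivative_C, derivative_X, zero_mul, zero_add]
    push_cast
    simp only [C_add, C_mul, map_natCast, C_1, map_ofNat] at ih hr ⊢
    linear_combination X * ih + ((k : ℝ[X]) + 2 + 2 * C lam) * hr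

theorem geg_ode (lam : ℝ) (k : ℕ) :
    (1 - X ^ 2) * derivative (derivative (geg lam k)) -
      C (2 * lam + 1) * X * derivative (geg lam k) +
      C ((k : ℝ) * ((k : ℝ) + 2 * lam)) * geg lam k = 0 := by
  cases k with
  | zero => simp [geg]
  | succ k => simpa using geg_ode_succ lam k

theorem geg_derivative_add_two' (lam : ℝ) (k : ℕ) :
    derivative (geg lam (k + 2)) =
      X * derivative (geg lam (k + 1)) + C ((k : ℝ) + 1 + 2 * lam) * geg lam (k + 1) :=
  geg_derivative_of_ode (geg_ode_succ lam k)

theorem X_mul_geg_derivative (lam : ℝ) (k : ℕ) :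
    X * derivative (geg lam (k + 1)) =
      C ((k : ℝ) + 1) * geg lam (k + 1) + derivative (geg lam k) := by
  cases k with
  | zero => simp [geg]
  | succ k =>
    have hd := geg_derivative_add_two' lam k
    have hr := geg_raise lam k
    rw [hd]
    push_cast
    simp only [C_add, C_mul, map_natCast, C_1, map_ofNat] at hr ⊢
    linear_combination -hr

theorem geg_derivative_add_two (lam : ℝ) (k : ℕ) :
    derivative (geg lam (k + 2)) =
      derivative (geg lam k) + C (2 * ((k : ℝ) + 1 + lam)) * geg lam (k + 1) := by
  rw [geg_derivative_add_two', X_mul_geg_derivative]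
  simp only [C_add, C_mul, map_natCast, C_1, map_ofNat]
  ring

theorem coeff_geg_add_two (lam : ℝ) (k j : ℕ) :
    ((j : ℝ) + 1) * (geg lam (k + 2)).coeff (j + 1) =
      ((j : ℝ) + k + 1 + 2 * lam) * (geg lam (k + 1)).coeff j := by
  have h := congrArg (fun p => coeff p j) (geg_derivative_add_two' lam k)
  simp only [coeff_derivative, coeff_add, coeff_C_mul] at h
  rw [mul_comm, h]
  cases j with
  | zero => simp
  | succ j =>
    rw [coeff_X_mul, coeff_derivative]
    push_cast
    ring

theorem coeff_geg_eq_zero (lam : ℝ) (k j : ℕ) (hj : k < j) : (geg lam k).coeff j = 0 := by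
  induction k generalizing j with
  | zero => simp [geg, coeff_one, hj.ne']
  | succ k ih =>
    cases k with
    | zero => simp [geg, coeff_X, hj.ne]
    | succ k =>
      obtain ⟨i, rfl⟩ : ∃ i, j = i + 1 := ⟨j - 1, by omega⟩
      have h := coeff_geg_add_two lam k i
      rw [ih i (by omega), mul_zero] at h
      exact (mul_eq_zero.1 h).resolve_left (by positivity)

theorem coeff_geg_self_pos {lam : ℝ} (hlam : -(1 / 2 : ℝ) < lam) (k : ℕ) :
    0 < (geg lam k).coeff k := by
  induction k with
  | zero => simp [geg]
  | succ k ih =>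
    cases k with
    | zero => simp [geg]
    | succ k =>
      have h := coeff_geg_add_two lam k (k + 1)
      push_cast at h
      have h1 : (0 : ℝ) < (k : ℝ) + 1 + k + 1 + 2 * lam := by
        have : (0 : ℝ) ≤ k := k.cast_nonneg
        linarith
      have h2 : (0 : ℝ) < (k : ℝ) + 1 + 1 := by positivity
      have h3 := mul_pos h1 ih
      rw [← h] at h3
      exact pos_of_mul_pos_right h3 h2.le

theorem natDegree_geg_le (lam : ℝ) (k : ℕ) : (geg lam k).natDegree ≤ k :=
  natDegree_le_iff_coeff_eq_zero.2 fun j hj => coeff_geg_eq_zero lam k j hj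

/-- The part of a Gegenbauer expansion supported on the degrees `e, e + 2, …`. -/
noncomputable def gegChain (lam : ℝ) (e : ℕ) (a : ℕ → ℝ) (m : ℕ) : ℝ[X] :=
  ∑ i ∈ Finset.range m, C (a i) * geg lam (2 * i + e)

theorem gegChain_succ (lam : ℝ) (e : ℕ) (a : ℕ → ℝ) (m : ℕ) :
    gegChain lam e a (m + 1) = gegChain lam e a m + C (a m) * geg lam (2 * m + e) :=
  Finset.sum_range_succ _ _

theorem gegChain_update (lam : ℝ) (e : ℕ) (a : ℕ → ℝ) (m : ℕ) (c : ℝ) :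
    gegChain lam e (Function.update a m c) (m + 1) =
      gegChain lam e a m + C c * geg lam (2 * m + e) := by
  rw [gegChain_succ, Function.update_self]
  congr 1
  refine Finset.sum_congr rfl fun i hi => ?_
  rw [Function.update_of_ne (Finset.mem_range.1 hi).ne]

theorem exists_gegChain_decomposition {lam : ℝ} (hlam : -(1 / 2 : ℝ) < lam) (n : ℕ) (p : ℝ[X])
    (hp : p.natDegree ≤ n) : ∃ (c : ℝ) (a b : ℕ → ℝ),
      p = C c + gegChain lam 1 a ((n + 1) / 2) + gegChain lam 2 b (n / 2) := by
  induction n generalizing p with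
  | zero =>
    refine ⟨p.coeff 0, 0, 0, ?_⟩
    simp only [gegChain]
    simpa using eq_C_of_natDegree_le_zero hp
  | succ n ih =>
    have hpos := coeff_geg_self_pos hlam (n + 1)
    set r : ℝ := p.coeff (n + 1) / (geg lam (n + 1)).coeff (n + 1) with hr
    obtain ⟨c, a, b, h⟩ := ih (p - C r * geg lam (n + 1)) <| by
      rw [natDegree_le_iff_coeff_eq_zero] at hp ⊢
      intro j hj
      rw [coeff_sub, coeff_C_mul]
      rcases Nat.lt_or_ge (n + 1) j with h | h
      · rw [hp j h, coeff_geg_eq_zero lam _ j h, mul_zero, sub_zero]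
      · obtain rfl : j = n + 1 := by omega
        rw [hr, div_mul_cancel₀ _ hpos.ne', sub_self]
    rw [sub_eq_iff_eq_add] at h
    rcases Nat.even_or_odd' n with ⟨m, rfl | rfl⟩
    · refine ⟨c, Function.update a m r, b, ?_⟩
      have e1 : (2 * m + 1 + 1) / 2 = m + 1 := by omega
      have e2 : (2 * m + 1) / 2 = m := by omega
      have e3 : 2 * m / 2 = m := by omega
      rw [e2, e3] at h
      rw [e1, e2, gegChain_update, h]
      ring
    · refine ⟨c, a, Function.update b m r, ?_⟩
      have e1 : (2 * m + 1 + 1) / 2 = m + 1 := by omega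
      have e2 : (2 * m + 1) / 2 = m := by omega
      have e3 : (2 * m + 1 + 1 + 1) / 2 = m + 1 := by omega
      rw [e1, e2] at h
      rw [e3, e1, gegChain_update, h]
      ring

namespace IsGegenbauerFunctional

variable {lam : ℝ} {L : ℝ[X] →ₗ[ℝ] ℝ}

theorem map_C_mul (L : ℝ[X] →ₗ[ℝ] ℝ) (a : ℝ) (p : ℝ[X]) : L (C a * p) = a * L p := by
  rw [C_mul', map_smul, smul_eq_mul]

theorem sq_nonneg (h : IsGegenbauerFunctional lam L) (p : ℝ[X]) : 0 ≤ L (p ^ 2) := by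
  rcases eq_or_ne p 0 with rfl | hp
  · simp
  · exact (h.pos p hp).le

/-- Green's formula for the Gegenbauer operator. -/
theorem green (h : IsGegenbauerFunctional lam L) (p q : ℝ[X]) :
    L (((1 - X ^ 2) * derivative (derivative p) - C (2 * lam + 1) * X * derivative p) * q) =
      -L ((1 - X ^ 2) * (derivative p * derivative q)) := by
  have := h.parts (derivative p * q)
  rw [derivative_mul] at this
  rw [eq_neg_iff_add_eq_zero, ← map_add, ← this]
  congr 1
  ring

theorem eigen (h : IsGegenbauerFunctional lam L) (k : ℕ) (q : ℝ[X]) :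
    L ((1 - X ^ 2) * (derivative (geg lam k) * derivative q)) =
      (k : ℝ) * ((k : ℝ) + 2 * lam) * L (geg lam k * q) := by
  have hg := h.green (geg lam k) q
  rw [← map_C_mul, ← neg_inj, ← hg, ← map_neg]
  congr 1
  linear_combination q * geg_ode lam k

theorem orthogonal (h : IsGegenbauerFunctional lam L) (hlam : -(1 / 2 : ℝ) < lam) {j k : ℕ}
    (hjk : j ≠ k) : L (geg lam j * geg lam k) = 0 := by
  wlog hlt : j < k generalizing j k
  · rw [mul_comm]
    exact this hjk.symm (by omega)
  have h1 := h.eigen j (geg lam k)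
  have h2 := h.eigen k (geg lam j)
  rw [mul_comm (derivative (geg lam k)), mul_comm (geg lam k), h1] at h2
  have h3 : ((k : ℝ) - j) * (k + j + 2 * lam) * L (geg lam j * geg lam k) = 0 := by
    linear_combination -h2
  have h4 : (j : ℝ) + 1 ≤ k := by exact_mod_cast hlt
  have h5 : (0 : ℝ) ≤ j := j.cast_nonneg
  refine (mul_eq_zero.1 h3).resolve_left (mul_pos ?_ ?_).ne' <;> linarith

theorem derivative_orthogonal (h : IsGegenbauerFunctional lam L) (hlam : -(1 / 2 : ℝ) < lam)
    {j k : ℕ} (hjk : j ≤ k) : L (derivative (geg lam j) * geg lam k) = 0 := by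
  induction j using Nat.twoStepInduction with
  | zero => simp [geg]
  | one =>
    have h0 := h.orthogonal hlam (j := 0) (k := k) (by omega)
    have : derivative (geg lam 1) * geg lam k = C 2 * (geg lam 0 * geg lam k) := by simp [geg]
    rw [this, map_C_mul, h0, mul_zero]
  | more j ih _ =>
    rw [geg_derivative_add_two, add_mul, map_add, ih (by omega), mul_assoc, map_C_mul,
      h.orthogonal hlam (by omega), mul_zero, add_zero]

theorem derivative_gram_succ (h : IsGegenbauerFunctional lam L) (hlam : -(1 / 2 : ℝ) < lam)
    (k : ℕ) : L (derivative (geg lam k) * derivative (geg lam (k + 1))) = 0 := by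
  induction k with
  | zero => simp [geg]
  | succ k ih =>
    rw [geg_derivative_add_two, mul_add, map_add, mul_comm, ih, mul_left_comm, map_C_mul,
      h.derivative_orthogonal hlam le_rfl, mul_zero, add_zero]

theorem derivative_gram_add (h : IsGegenbauerFunctional lam L) (hlam : -(1 / 2 : ℝ) < lam)
    {k l : ℕ} (hkl : k ≤ l + 1) (i : ℕ) :
    L (derivative (geg lam k) * derivative (geg lam (2 * i + l))) =
      L (derivative (geg lam k) * derivative (geg lam l)) := by
  induction i with
  | zero => simp
  | succ i ih =>
    rw [show 2 * (i + 1) + l = 2 * i + l + 2 by ring, geg_derivative_add_two, mul_add, map_add,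
      ih, mul_left_comm, map_C_mul, h.derivative_orthogonal hlam (by omega), mul_zero, add_zero]

theorem derivative_gram_odd (h : IsGegenbauerFunctional lam L) (hlam : -(1 / 2 : ℝ) < lam)
    (i j : ℕ) : L (derivative (geg lam (2 * i + 1)) * derivative (geg lam (2 * j + 2))) = 0 := by
  rcases le_or_gt i j with hij | hij
  · rw [show 2 * j + 2 = 2 * (j - i) + (2 * i + 1 + 1) by omega,
      h.derivative_gram_add hlam (by omega), h.derivative_gram_succ hlam]
  · rw [mul_comm, show 2 * i + 1 = 2 * (i - j - 1) + (2 * j + 2 + 1) by omega,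
      h.derivative_gram_add hlam (by omega), h.derivative_gram_succ hlam]

theorem geg_ne_zero (hlam : -(1 / 2 : ℝ) < lam) (k : ℕ) : geg lam k ≠ 0 := by
  intro h
  have := coeff_geg_self_pos hlam k
  simp [h] at this

theorem normSq_pos (h : IsGegenbauerFunctional lam L) (hlam : -(1 / 2 : ℝ) < lam) (k : ℕ) :
    0 < L (geg lam k ^ 2) :=
  h.pos _ (geg_ne_zero hlam k)

theorem derivative_normSq_succ (h : IsGegenbauerFunctional lam L) (hlam : -(1 / 2 : ℝ) < lam)
    (k : ℕ) : L (derivative (geg lam (k + 1)) ^ 2) = L (derivative (geg lam k) ^ 2) +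
      2 * (k + 1) * (k + 1 + lam) * L (geg lam (k + 1) ^ 2) := by
  have h1 := h.eigen (k + 1) (geg lam (k + 1))
  have h2 : L ((X * derivative (geg lam (k + 1))) ^ 2) =
      (k + 1) ^ 2 * L (geg lam (k + 1) ^ 2) + L (derivative (geg lam k) ^ 2) := by
    have e : (C ((k : ℝ) + 1) * geg lam (k + 1) + derivative (geg lam k)) ^ 2 =
        C (((k : ℝ) + 1) ^ 2) * geg lam (k + 1) ^ 2 +
          C (2 * ((k : ℝ) + 1)) * (derivative (geg lam k) * geg lam (k + 1)) +
            derivative (geg lam k) ^ 2 := by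
      simp only [C_add, C_mul, C_pow, map_natCast, C_1, map_ofNat]
      ring
    rw [X_mul_geg_derivative, e, map_add, map_add, map_C_mul, map_C_mul,
      h.derivative_orthogonal hlam (Nat.le_succ k)]
    ring
  have h3 : derivative (geg lam (k + 1)) ^ 2 =
      (1 - X ^ 2) * (derivative (geg lam (k + 1)) * derivative (geg lam (k + 1))) +
        (X * derivative (geg lam (k + 1))) ^ 2 := by ring
  rw [h3, map_add, h1, h2, ← pow_two]
  push_cast
  ring

theorem derivative_normSq_add_two (h : IsGegenbauerFunctional lam L)
    (hlam : -(1 / 2 : ℝ) < lam) (k : ℕ) :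
    L (derivative (geg lam (k + 2)) ^ 2) = L (derivative (geg lam k) ^ 2) +
      4 * (k + 1 + lam) ^ 2 * L (geg lam (k + 1) ^ 2) := by
  have e : derivative (geg lam (k + 2)) ^ 2 = derivative (geg lam k) ^ 2 +
      C (4 * ((k : ℝ) + 1 + lam)) * (derivative (geg lam k) * geg lam (k + 1)) +
        C (4 * ((k : ℝ) + 1 + lam) ^ 2) * geg lam (k + 1) ^ 2 := by
    rw [geg_derivative_add_two]
    simp only [C_add, C_mul, C_pow, map_natCast, C_1, map_ofNat]
    ring
  rw [e, map_add, map_add, map_C_mul, map_C_mul, h.derivative_orthogonal hlam (Nat.le_succ k)]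
  ring

theorem normSq_succ (h : IsGegenbauerFunctional lam L) (hlam : -(1 / 2 : ℝ) < lam) (k : ℕ) :
    ((k : ℝ) + 2) * (k + 2 + lam) * L (geg lam (k + 2) ^ 2) =
      (k + 1 + lam) * (k + 1 + 2 * lam) * L (geg lam (k + 1) ^ 2) := by
  have h1 := h.derivative_normSq_add_two hlam k
  have h2 := h.derivative_normSq_succ hlam k
  have h3 := h.derivative_normSq_succ hlam (k + 1)
  push_cast at h3
  linear_combination (1 / 2 : ℝ) * (h1 - h2 - h3)

end IsGegenbauerFunctional

/-- The ratio `‖G'‖² / ‖G‖²` for the Gegenbauer polynomial of degree `x`. -/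
noncomputable def gegRatio (lam x : ℝ) : ℝ := 2 * x * (x + lam) * (x + 2 * lam) / (2 * lam + 1)

/-- The closed form of `∑ u_k² / h_k` divided by the last `u_k`, where `h_k` and `u_k` are the
squared norms of the Gegenbauer polynomials and of their derivatives. -/
noncomputable def gegQuotient (lam x : ℝ) : ℝ :=
  ((2 * lam + 3) * x ^ 4 + (2 * lam + 3) * (6 * lam + 5) * x ^ 3 +
    (24 * lam ^ 3 + 76 * lam ^ 2 + 76 * lam + 20) * x ^ 2 +
    (16 * lam ^ 4 + 64 * lam ^ 3 + 92 * lam ^ 2 + 40 * lam) * x -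
    8 * (2 * lam + 1) * (lam + 1)) / ((2 * lam + 1) * (2 * lam + 3) * (2 * lam + 5))

theorem gegQuotient_one {lam : ℝ} (hlam : -(1 / 2 : ℝ) < lam) :
    gegQuotient lam 1 = gegRatio lam 1 := by
  have h1 : 2 * lam + 1 ≠ 0 := by linarith
  have h3 : 2 * lam + 3 ≠ 0 := by linarith
  have h5 : 2 * lam + 5 ≠ 0 := by linarith
  unfold gegQuotient gegRatio
  field_simp
  ring

theorem gegQuotient_two {lam : ℝ} (hlam : -(1 / 2 : ℝ) < lam) :
    gegQuotient lam 2 = gegRatio lam 2 := by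
  have h1 : 2 * lam + 1 ≠ 0 := by linarith
  have h3 : 2 * lam + 3 ≠ 0 := by linarith
  have h5 : 2 * lam + 5 ≠ 0 := by linarith
  unfold gegQuotient gegRatio
  field_simp
  ring

theorem gegQuotient_add_two {lam : ℝ} (hlam : -(1 / 2 : ℝ) < lam) (x : ℝ) :
    (x + 2 + 2 * lam) * (x + 1 + 2 * lam) * (gegQuotient lam (x + 2) - gegRatio lam (x + 2)) =
      x * (x + 1) * gegQuotient lam x := by
  have h1 : 2 * lam + 1 ≠ 0 := by linarith
  have h3 : 2 * lam + 3 ≠ 0 := by linarith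
  have h5 : 2 * lam + 5 ≠ 0 := by linarith
  unfold gegQuotient gegRatio
  field_simp
  ring

theorem gegRatio_pos {lam x : ℝ} (hlam : -(1 / 2 : ℝ) < lam) (hx : 1 ≤ x) :
    0 < gegRatio lam x := by
  unfold gegRatio
  have h1 : 0 < 2 * lam + 1 := by linarith
  have h2 : 0 < x + lam := by linarith
  have h3 : 0 < x + 2 * lam := by linarith
  positivity

/-- A majorant for the traces of the squared Gram matrices of the derivatives. -/
noncomputable def traceMajorant (lam x : ℝ) : ℝ :=
  ((x + lam + 2) ^ 8 - (lam + 1) ^ 8) / (4 * (2 * lam + 1) ^ 2 * (2 * lam + 5))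

theorem traceMajorant_mono {lam x y : ℝ} (hlam : -(1 / 2 : ℝ) < lam) (hx : -1 ≤ x)
    (hxy : x ≤ y) : traceMajorant lam x ≤ traceMajorant lam y := by
  unfold traceMajorant
  have h5 : 0 < 2 * lam + 5 := by linarith
  have h0 : 0 ≤ x + lam + 2 := by linarith
  gcongr

theorem traceMajorant_nonneg {lam x : ℝ} (hlam : -(1 / 2 : ℝ) < lam) (hx : -1 ≤ x) :
    0 ≤ traceMajorant lam x := by
  refine le_trans (le_of_eq ?_) (traceMajorant_mono hlam le_rfl hx)
  unfold traceMajorant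
  ring

theorem trace_increment_le {lam x : ℝ} (hlam : -(1 / 2 : ℝ) < lam) (hx : 1 ≤ x) :
    traceMajorant lam (x - 2) + 2 * (gegRatio lam x * (gegQuotient lam x - gegRatio lam x)) +
      gegRatio lam x ^ 2 ≤ traceMajorant lam x := by
  have h1 : 0 < 2 * lam + 1 := by linarith
  have h3 : 0 < 2 * lam + 3 := by linarith
  have h5 : 0 < 2 * lam + 5 := by linarith
  obtain ⟨m, rfl⟩ : ∃ m, x = m - lam := ⟨x + lam, by ring⟩
  have hm : 0 < m := by linarith
  have hml : 0 ≤ m ^ 2 - lam ^ 2 := by nlinarith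
  set A := 10 * lam ^ 2 + 31 * lam + 20 with hA
  set R := 2 * lam ^ 5 + 13 * lam ^ 4 + 31 * lam ^ 3 + 36 * lam ^ 2 + 24 * lam + 8 with hR
  have hA0 : 0 ≤ A := by nlinarith
  have hA1 : A ≤ (21 + lam ^ 2) * (2 * lam + 3) := by
    nlinarith [mul_nonneg h1.le (sq_nonneg lam), mul_nonneg h1.le (sq_nonneg (lam - 2))]
  have hR0 : 0 ≤ R := by
    obtain ⟨s, hs⟩ : ∃ s, lam = (s - 1) / 2 := ⟨2 * lam + 1, by ring⟩
    have hs0 : 0 < s := by linarith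
    rw [hR, hs]
    ring_nf
    positivity
  have key : m * (m ^ 2 - lam ^ 2) * ((2 * lam + 3) * m ^ 4 + A * m ^ 2 - R) ≤
      (2 * lam + 3) * ((m + 1) ^ 7 + 7 * (m + 1) ^ 5 + 7 * (m + 1) ^ 3 + (m + 1)) := by
    have t1 : m * (m ^ 2 - lam ^ 2) * ((2 * lam + 3) * m ^ 4 + A * m ^ 2 - R) ≤
        m * (m ^ 2 - lam ^ 2) * ((2 * lam + 3) * m ^ 4 + A * m ^ 2) := by
      gcongr
      linarith
    have t2 : m * (m ^ 2 - lam ^ 2) * ((2 * lam + 3) * m ^ 4 + A * m ^ 2) ≤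
        (2 * lam + 3) * (m ^ 7 + 21 * m ^ 5) := by
      have := mul_nonneg (sub_nonneg.2 hA1) (pow_pos hm 5).le
      have := mul_nonneg (mul_nonneg hA0 (sq_nonneg lam)) (pow_pos hm 3).le
      linarith
    have t3 : m ^ 7 + 21 * m ^ 5 ≤ (m + 1) ^ 7 + 7 * (m + 1) ^ 5 + 7 * (m + 1) ^ 3 + (m + 1) := by
      rw [← sub_nonneg]
      ring_nf
      positivity
    exact t1.trans (t2.trans (by gcongr))
  have hK : 0 < 4 * (2 * lam + 1) ^ 2 * (2 * lam + 3) * (2 * lam + 5) := by positivity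
  have eR : (2 * lam + 1) * gegRatio lam (m - lam) = 2 * (m - lam) * m * (m + lam) := by
    rw [gegRatio, mul_div_cancel₀ _ h1.ne']
    ring
  have eQ := mul_div_cancel₀ ((2 * lam + 3) * (m - lam) ^ 4 +
    (2 * lam + 3) * (6 * lam + 5) * (m - lam) ^ 3 +
    (24 * lam ^ 3 + 76 * lam ^ 2 + 76 * lam + 20) * (m - lam) ^ 2 +
    (16 * lam ^ 4 + 64 * lam ^ 3 + 92 * lam ^ 2 + 40 * lam) * (m - lam) -
    8 * (2 * lam + 1) * (lam + 1)) (mul_pos (mul_pos h1 h3) h5).ne'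
  rw [← gegQuotient] at eQ
  have eT : ∀ y, 4 * (2 * lam + 1) ^ 2 * (2 * lam + 5) * traceMajorant lam y =
      (y + lam + 2) ^ 8 - (lam + 1) ^ 8 := fun y =>
    mul_div_cancel₀ _ (by positivity)
  have e : 4 * (2 * lam + 1) ^ 2 * (2 * lam + 3) * (2 * lam + 5) *
      (traceMajorant lam (m - lam) - (traceMajorant lam (m - lam - 2) +
      2 * (gegRatio lam (m - lam) * (gegQuotient lam (m - lam) - gegRatio lam (m - lam))) +
      gegRatio lam (m - lam) ^ 2)) =
      16 * ((2 * lam + 3) * ((m + 1) ^ 7 + 7 * (m + 1) ^ 5 + 7 * (m + 1) ^ 3 + (m + 1)) -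
        m * (m ^ 2 - lam ^ 2) * ((2 * lam + 3) * m ^ 4 + A * m ^ 2 - R)) := by
    generalize gegRatio lam (m - lam) = r at *
    generalize gegQuotient lam (m - lam) = q at *
    trans (2 * lam + 3) * (4 * (2 * lam + 1) ^ 2 * (2 * lam + 5) * traceMajorant lam (m - lam)) -
      (2 * lam + 3) * (4 * (2 * lam + 1) ^ 2 * (2 * lam + 5) * traceMajorant lam (m - lam - 2)) -
      8 * ((2 * lam + 1) * r) * ((2 * lam + 1) * (2 * lam + 3) * (2 * lam + 5) * q) +
      4 * (2 * lam + 3) * (2 * lam + 5) * ((2 * lam + 1) * r) ^ 2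
    · ring
    · rw [eR, eQ, eT, eT, hA, hR]
      ring
  rw [← sub_nonneg]
  refine nonneg_of_mul_nonneg_right (le_of_le_of_eq ?_ e.symm) hK
  exact mul_nonneg (by norm_num) (sub_nonneg.2 key)

theorem lower_lt_gegQuotient {lam x : ℝ} (hlam : -(1 / 2 : ℝ) < lam) (hx : 3 ≤ x) :
    (x + lam) ^ 2 * (x + 2 * min 0 lam) ^ 2 / ((2 * lam + 1) * (2 * lam + 5)) <
      gegQuotient lam x := by
  have h1 : 0 < 2 * lam + 1 := by linarith
  have h3 : 0 < 2 * lam + 3 := by linarith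
  have h5 : 0 < 2 * lam + 5 := by linarith
  have hmin : (x + 2 * min 0 lam) ^ 2 ≤ x ^ 2 := by
    have a1 : min 0 lam ≤ 0 := min_le_left _ _
    have a2 : -(1 / 2) ≤ min 0 lam := le_min (by norm_num) hlam.le
    exact pow_le_pow_left₀ (by linarith) (by linarith) 2
  have key : (2 * lam + 3) * ((x + lam) ^ 2 * x ^ 2) <
      (2 * lam + 3) * x ^ 4 + (2 * lam + 3) * (6 * lam + 5) * x ^ 3 +
      (24 * lam ^ 3 + 76 * lam ^ 2 + 76 * lam + 20) * x ^ 2 +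
      (16 * lam ^ 4 + 64 * lam ^ 3 + 92 * lam ^ 2 + 40 * lam) * x -
      8 * (2 * lam + 1) * (lam + 1) := by
    obtain ⟨t, rfl⟩ : ∃ t, x = t + 3 := ⟨x - 3, by ring⟩
    obtain ⟨s, rfl⟩ : ∃ s, lam = (s - 1) / 2 := ⟨2 * lam + 1, by ring⟩
    have ht : 0 ≤ t := by linarith
    have hs : 0 < s := by linarith
    rw [← sub_pos]
    ring_nf
    positivity
  calc _ ≤ (x + lam) ^ 2 * x ^ 2 / ((2 * lam + 1) * (2 * lam + 5)) := by gcongr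
    _ = (2 * lam + 3) * ((x + lam) ^ 2 * x ^ 2) /
        ((2 * lam + 1) * (2 * lam + 3) * (2 * lam + 5)) := by
      rw [div_eq_div_iff (by positivity) (by positivity)]
      ring
    _ < _ := by
      unfold gegQuotient
      gcongr

theorem quadratic_step {τ τ' E D X y Q w : ℝ} (hτ : 0 ≤ τ) (hE : 0 ≤ E) (hX : 0 ≤ X) (hy : 0 ≤ y)
    (hQ : Q ≤ √τ * X) (hw : w ^ 2 ≤ E * X * y) (hτ' : τ + 2 * E + D ^ 2 ≤ τ') :
    Q + 2 * w + D * y ≤ √τ' * (X + y) := by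
  have hw' : w ≤ √E * √X * √y := by
    rw [← Real.sqrt_mul hE, ← Real.sqrt_mul (mul_nonneg hE hX)]
    exact Real.le_sqrt_of_sq_le hw
  set t := √τ
  set g := √E
  set x := √X
  set z := √y
  have ht : τ = t ^ 2 := (Real.sq_sqrt hτ).symm
  have hg : E = g ^ 2 := (Real.sq_sqrt hE).symm
  have hx : X = x ^ 2 := (Real.sq_sqrt hX).symm
  have hz : y = z ^ 2 := (Real.sq_sqrt hy).symm
  rw [hx] at hQ
  rw [ht, hg] at hτ'
  rw [hx, hz]
  have h1 : Q + 2 * w + D * z ^ 2 ≤ t * x ^ 2 + 2 * (g * x * z) + D * z ^ 2 := by linarith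
  refine h1.trans ?_
  have h2 : t * x ^ 2 + 2 * (g * x * z) + D * z ^ 2 ≤
      √((t ^ 2 + 2 * g ^ 2 + D ^ 2) * (x ^ 2 + z ^ 2) ^ 2) := by
    refine Real.le_sqrt_of_sq_le ?_
    have e : (t ^ 2 + 2 * g ^ 2 + D ^ 2) * (x ^ 2 + z ^ 2) ^ 2 -
        (t * x ^ 2 + 2 * (g * x * z) + D * z ^ 2) ^ 2 =
        2 * (t * x * z - g * x ^ 2) ^ 2 + (t * z ^ 2 - D * x ^ 2) ^ 2 +
          2 * (g * z ^ 2 - D * x * z) ^ 2 := by ring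
    rw [← sub_nonneg, e]
    positivity
  refine h2.trans ?_
  rw [Real.sqrt_mul (by positivity), Real.sqrt_sq (by positivity)]
  gcongr

namespace IsGegenbauerFunctional

variable {lam : ℝ} {L : ℝ[X] →ₗ[ℝ] ℝ}

theorem derivative_normSq_eq (h : IsGegenbauerFunctional lam L) (hlam : -(1 / 2 : ℝ) < lam)
    (k : ℕ) : L (derivative (geg lam (k + 1)) ^ 2) =
      gegRatio lam (k + 1) * L (geg lam (k + 1) ^ 2) := by
  have h1 : 2 * lam + 1 ≠ 0 := by linarith
  induction k with
  | zero =>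
    rw [h.derivative_normSq_succ hlam 0]
    simp only [geg, gegRatio, derivative_one, zero_pow two_ne_zero, map_zero]
    push_cast
    field_simp
    ring
  | succ k ih =>
    have h2 := h.derivative_normSq_succ hlam (k + 1)
    have h3 := h.normSq_succ hlam k
    rw [ih] at h2
    rw [h2]
    unfold gegRatio
    push_cast
    field_simp
    linear_combination (-((k : ℝ) + 1)) * h3

theorem derivative_normSq_shift (h : IsGegenbauerFunctional lam L) (hlam : -(1 / 2 : ℝ) < lam)
    (k : ℕ) : ((k : ℝ) + 1) * L (derivative (geg lam (k + 2)) ^ 2) =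
      (k + 2 + 2 * lam) * L (derivative (geg lam (k + 1)) ^ 2) := by
  have h1 : 2 * lam + 1 ≠ 0 := by linarith
  have h2 := h.derivative_normSq_eq hlam k
  have h3 := h.derivative_normSq_succ hlam (k + 1)
  have h4 := h.normSq_succ hlam k
  rw [h3, h2]
  unfold gegRatio
  push_cast
  field_simp
  linear_combination (2 * lam + 1) * h4

theorem sum_derivative_normSq (h : IsGegenbauerFunctional lam L) (hlam : -(1 / 2 : ℝ) < lam)
    {e : ℕ} (he : 1 ≤ e) (hq : gegQuotient lam e = gegRatio lam e) (m : ℕ) :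
    ∑ i ∈ Finset.range m, gegRatio lam ((2 * i + e : ℕ) : ℝ) *
        L (derivative (geg lam (2 * i + e)) ^ 2) =
      L (derivative (geg lam (2 * m + e)) ^ 2) *
        (gegQuotient lam ((2 * m + e : ℕ) : ℝ) - gegRatio lam ((2 * m + e : ℕ) : ℝ)) := by
  induction m with
  | zero => simp [hq]
  | succ m ih =>
    rw [Finset.sum_range_succ, ih]
    obtain ⟨k, hk⟩ : ∃ k, 2 * m + e = k + 1 := ⟨2 * m + e - 1, by omega⟩
    rw [show 2 * (m + 1) + e = k + 3 by omega, hk]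
    have h1 := h.derivative_normSq_shift hlam k
    have h2 := h.derivative_normSq_shift hlam (k + 1)
    have h3 := gegQuotient_add_two hlam ((k : ℝ) + 1)
    have e1 : ((k + 1 : ℕ) : ℝ) = (k : ℝ) + 1 := by push_cast; ring
    have e2 : ((k + 3 : ℕ) : ℝ) = (k : ℝ) + 1 + 2 := by push_cast; ring
    rw [e1] at h2 ⊢
    rw [e2]
    have hne : ((k : ℝ) + 1) * ((k : ℝ) + 1 + 1) ≠ 0 := by positivity
    apply mul_left_cancel₀ hne
    set q := gegQuotient lam ((k : ℝ) + 1)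
    set d := gegQuotient lam ((k : ℝ) + 1 + 2) - gegRatio lam ((k : ℝ) + 1 + 2)
    linear_combination (-L (derivative (geg lam (k + 1)) ^ 2)) * h3 -
      (((k : ℝ) + 1) * d) * h2 - ((k : ℝ) + 3 + 2 * lam) * d * h1

theorem chain_mul_geg (h : IsGegenbauerFunctional lam L) (hlam : -(1 / 2 : ℝ) < lam) (e : ℕ)
    (a : ℕ → ℝ) (m : ℕ) {k : ℕ} (hk : ∀ i < m, 2 * i + e ≠ k) :
    L (gegChain lam e a m * geg lam k) = 0 := by
  rw [gegChain, Finset.sum_mul, map_sum]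
  refine Finset.sum_eq_zero fun i hi => ?_
  rw [mul_assoc, map_C_mul, h.orthogonal hlam (hk i (Finset.mem_range.1 hi)), mul_zero]

theorem derivative_chain (lam : ℝ) (e : ℕ) (a : ℕ → ℝ) (m : ℕ) :
    derivative (gegChain lam e a m) =
      ∑ i ∈ Finset.range m, C (a i) * derivative (geg lam (2 * i + e)) := by
  simp [gegChain]

theorem derivative_chain_mul (h : IsGegenbauerFunctional lam L) (hlam : -(1 / 2 : ℝ) < lam)
    (e : ℕ) (a : ℕ → ℝ) {m k : ℕ} (hk : m ≤ k + 1) :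
    L (derivative (gegChain lam e a m) * derivative (geg lam (2 * k + e))) =
      ∑ i ∈ Finset.range m, a i * L (derivative (geg lam (2 * i + e)) ^ 2) := by
  rw [derivative_chain, Finset.sum_mul, map_sum]
  refine Finset.sum_congr rfl fun i hi => ?_
  have := Finset.mem_range.1 hi
  rw [mul_assoc, map_C_mul, show 2 * k + e = 2 * (k - i) + (2 * i + e) by omega,
    h.derivative_gram_add hlam (by omega), pow_two]

theorem chain_normSq (h : IsGegenbauerFunctional lam L) (hlam : -(1 / 2 : ℝ) < lam) (e : ℕ)
    (a : ℕ → ℝ) (m : ℕ) : L (gegChain lam e a m ^ 2) =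
      ∑ i ∈ Finset.range m, a i ^ 2 * L (geg lam (2 * i + e) ^ 2) := by
  induction m with
  | zero => simp [gegChain]
  | succ m ih =>
    have e1 : gegChain lam e a (m + 1) ^ 2 = gegChain lam e a m ^ 2 +
        C (2 * a m) * (gegChain lam e a m * geg lam (2 * m + e)) +
          C (a m ^ 2) * geg lam (2 * m + e) ^ 2 := by
      rw [gegChain_succ]
      simp only [C_mul, C_pow, map_ofNat]
      ring
    rw [e1, map_add, map_add, map_C_mul, map_C_mul,
      h.chain_mul_geg hlam e a m (fun i hi => by omega), ih, Finset.sum_range_succ]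
    ring

theorem chain_bound (h : IsGegenbauerFunctional lam L) (hlam : -(1 / 2 : ℝ) < lam)
    {e : ℕ} (he : 1 ≤ e) (hq : gegQuotient lam e = gegRatio lam e) (a : ℕ → ℝ) (m : ℕ) :
    L (derivative (gegChain lam e a m) ^ 2) ≤
      √(traceMajorant lam (((2 * m + e : ℕ) : ℝ) - 2)) * L (gegChain lam e a m ^ 2) := by
  induction m with
  | zero => simp [gegChain]
  | succ m ih =>
    have hcast : (1 : ℝ) ≤ ((2 * m + e : ℕ) : ℝ) := by exact_mod_cast (by omega : 1 ≤ 2 * m + e)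
    have hpos := gegRatio_pos hlam hcast
    have hsum := h.sum_derivative_normSq hlam he hq m
    have hratio : ∀ i, L (derivative (geg lam (2 * i + e)) ^ 2) =
        gegRatio lam ((2 * i + e : ℕ) : ℝ) * L (geg lam (2 * i + e) ^ 2) := fun i => by
      obtain ⟨k, hk⟩ : ∃ k, 2 * i + e = k + 1 := ⟨2 * i + e - 1, by omega⟩
      rw [hk, h.derivative_normSq_eq hlam k]
      push_cast
      rfl
    have hpos' : ∀ i, 0 < gegRatio lam ((2 * i + e : ℕ) : ℝ) := fun i =>
      gegRatio_pos hlam (by exact_mod_cast (by omega : 1 ≤ 2 * i + e))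
    have hinc := trace_increment_le hlam hcast
    have e1 : derivative (gegChain lam e a (m + 1)) ^ 2 = derivative (gegChain lam e a m) ^ 2 +
        C (2 * a m) * (derivative (gegChain lam e a m) * derivative (geg lam (2 * m + e))) +
          C (a m ^ 2) * derivative (geg lam (2 * m + e)) ^ 2 := by
      rw [gegChain_succ]
      simp only [derivative_add, derivative_mul, derivative_C, zero_mul, zero_add, C_mul, C_pow,
        map_ofNat]
      ring
    have e2 : ((2 * (m + 1) + e : ℕ) : ℝ) - 2 = ((2 * m + e : ℕ) : ℝ) := by push_cast; ring
    rw [e1, map_add, map_add, map_C_mul, map_C_mul, h.derivative_chain_mul hlam e a (by omega),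
      h.chain_normSq hlam, Finset.sum_range_succ, ← h.chain_normSq hlam, e2, hratio m]
    have hh := h.normSq_pos hlam (2 * m + e)
    have hS : 0 ≤ ∑ i ∈ Finset.range m, gegRatio lam ((2 * i + e : ℕ) : ℝ) *
        L (derivative (geg lam (2 * i + e)) ^ 2) :=
      Finset.sum_nonneg fun i _ => mul_nonneg (hpos' i).le (h.sq_nonneg _)
    have hE : 0 ≤ gegRatio lam ((2 * m + e : ℕ) : ℝ) *
        (gegQuotient lam ((2 * m + e : ℕ) : ℝ) - gegRatio lam ((2 * m + e : ℕ) : ℝ)) := by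
      rw [hsum, hratio m] at hS
      refine mul_nonneg hpos.le ?_
      rw [mul_nonneg_iff_of_pos_left (mul_pos hpos hh)] at hS
      exact hS
    have hcs : (∑ i ∈ Finset.range m, a i * L (derivative (geg lam (2 * i + e)) ^ 2)) ^ 2 ≤
        L (gegChain lam e a m ^ 2) * ∑ i ∈ Finset.range m, gegRatio lam ((2 * i + e : ℕ) : ℝ) *
          L (derivative (geg lam (2 * i + e)) ^ 2) := by
      rw [h.chain_normSq hlam]
      refine Finset.sum_sq_le_sum_mul_sum_of_sq_le_mul _
        (fun i _ => mul_nonneg (_root_.sq_nonneg _) (h.sq_nonneg _))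
        (fun i _ => mul_nonneg (hpos' i).le (h.sq_nonneg _)) fun i _ => ?_
      rw [hratio i]
      exact le_of_eq (by ring)
    rw [hsum, hratio m] at hcs
    have hstep := quadratic_step (w := a m * ∑ i ∈ Finset.range m,
        a i * L (derivative (geg lam (2 * i + e)) ^ 2))
      (y := a m ^ 2 * L (geg lam (2 * m + e) ^ 2))
      (traceMajorant_nonneg hlam (by linarith)) hE (h.sq_nonneg _)
      (mul_nonneg (_root_.sq_nonneg _) hh.le) ih ?_ hinc
    · linarith
    · rw [mul_pow]
      refine (mul_le_mul_of_nonneg_left hcs (_root_.sq_nonneg (a m))).trans (le_of_eq ?_)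
      ring

theorem markov_upper (h : IsGegenbauerFunctional lam L) (hlam : -(1 / 2 : ℝ) < lam) {n : ℕ}
    {p : ℝ[X]} (hp : p.natDegree ≤ n) :
    L (derivative p ^ 2) ≤ √(traceMajorant lam n) * L (p ^ 2) := by
  obtain ⟨c, a, b, rfl⟩ := exists_gegChain_decomposition hlam n p hp
  set O := gegChain lam 1 a ((n + 1) / 2) with hO
  set V := gegChain lam 2 b (n / 2) with hV
  have hn0 : (0 : ℝ) ≤ n := n.cast_nonneg
  have hOV : L (O * V) = 0 := by
    rw [hV, gegChain, Finset.mul_sum, map_sum]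
    refine Finset.sum_eq_zero fun j _ => ?_
    rw [mul_left_comm, map_C_mul, h.chain_mul_geg hlam 1 a _ (fun i _ => by omega), mul_zero]
  have hO1 : L O = 0 := by
    simpa [geg] using h.chain_mul_geg hlam 1 a ((n + 1) / 2) (k := 0) (fun i _ => by omega)
  have hV1 : L V = 0 := by
    simpa [geg] using h.chain_mul_geg hlam 2 b (n / 2) (k := 0) (fun i _ => by omega)
  have hOV' : L (derivative O * derivative V) = 0 := by
    rw [hO, hV, derivative_chain, derivative_chain, Finset.sum_mul_sum, map_sum]
    refine Finset.sum_eq_zero fun i _ => ?_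
    rw [map_sum]
    refine Finset.sum_eq_zero fun j _ => ?_
    rw [mul_mul_mul_comm, ← C_mul, map_C_mul, h.derivative_gram_odd hlam, mul_zero]
  have e1 : (C c + O + V) ^ 2 = C c ^ 2 + O ^ 2 + V ^ 2 + C (2 * c) * O + C (2 * c) * V +
      C 2 * (O * V) := by
    simp only [C_mul, map_ofNat]
    ring
  have e2 : derivative (C c + O + V) ^ 2 = derivative O ^ 2 + derivative V ^ 2 +
      C 2 * (derivative O * derivative V) := by
    simp only [derivative_add, derivative_C, map_ofNat]
    ring
  have hc := h.sq_nonneg (C c)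
  have bO : L (derivative O ^ 2) ≤ √(traceMajorant lam n) * L (O ^ 2) := by
    have hcast : ((2 * ((n + 1) / 2) + 1 : ℕ) : ℝ) ≤ ((n + 2 : ℕ) : ℝ) := by
      exact_mod_cast (by omega : 2 * ((n + 1) / 2) + 1 ≤ n + 2)
    have hcast' : (1 : ℝ) ≤ ((2 * ((n + 1) / 2) + 1 : ℕ) : ℝ) := by
      exact_mod_cast (by omega : 1 ≤ 2 * ((n + 1) / 2) + 1)
    rw [Nat.cast_add n 2, Nat.cast_ofNat] at hcast
    refine (h.chain_bound hlam le_rfl (by simpa using gegQuotient_one hlam) a _).trans ?_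
    refine mul_le_mul_of_nonneg_right (Real.sqrt_le_sqrt ?_) (h.sq_nonneg _)
    exact traceMajorant_mono hlam (by linarith) (by linarith)
  have bV : L (derivative V ^ 2) ≤ √(traceMajorant lam n) * L (V ^ 2) := by
    have hcast : ((2 * (n / 2) + 2 : ℕ) : ℝ) ≤ ((n + 2 : ℕ) : ℝ) := by
      exact_mod_cast (by omega : 2 * (n / 2) + 2 ≤ n + 2)
    have hcast' : (1 : ℝ) ≤ ((2 * (n / 2) + 2 : ℕ) : ℝ) := by
      exact_mod_cast (by omega : 1 ≤ 2 * (n / 2) + 2)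
    rw [Nat.cast_add n 2, Nat.cast_ofNat] at hcast
    refine (h.chain_bound hlam one_le_two (by simpa using gegQuotient_two hlam) b _).trans ?_
    refine mul_le_mul_of_nonneg_right (Real.sqrt_le_sqrt ?_) (h.sq_nonneg _)
    exact traceMajorant_mono hlam (by linarith) (by linarith)
  rw [e1, e2]
  simp only [map_add, map_C_mul, hOV, hOV', hO1, hV1]
  have := mul_nonneg (Real.sqrt_nonneg (traceMajorant lam n)) hc
  linarith

theorem markov_lower_chain (h : IsGegenbauerFunctional lam L) (hlam : -(1 / 2 : ℝ) < lam)
    {e : ℕ} (he : 1 ≤ e) (hq : gegQuotient lam e = gegRatio lam e) (m : ℕ) :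
    ∃ p : ℝ[X], p ≠ 0 ∧ p.natDegree ≤ 2 * m + e ∧
      gegQuotient lam ((2 * m + e : ℕ) : ℝ) * L (p ^ 2) ≤ L (derivative p ^ 2) := by
  set a : ℕ → ℝ := fun i => gegRatio lam ((2 * i + e : ℕ) : ℝ) with ha
  set p := gegChain lam e a (m + 1) with hp
  set q := gegQuotient lam ((2 * m + e : ℕ) : ℝ) with hqd
  set u := L (derivative (geg lam (2 * m + e)) ^ 2) with hu
  have hpos : ∀ i, 0 < a i := fun i =>
    gegRatio_pos hlam (by exact_mod_cast (by omega : 1 ≤ 2 * i + e))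
  have hratio : ∀ i, L (derivative (geg lam (2 * i + e)) ^ 2) =
      a i * L (geg lam (2 * i + e) ^ 2) := fun i => by
    obtain ⟨k, hk⟩ : ∃ k, 2 * i + e = k + 1 := ⟨2 * i + e - 1, by omega⟩
    simp only [ha]
    rw [hk, h.derivative_normSq_eq hlam k]
    push_cast
    rfl
  have hS : ∑ i ∈ Finset.range (m + 1), a i * L (derivative (geg lam (2 * i + e)) ^ 2) =
      u * q := by
    rw [Finset.sum_range_succ, h.sum_derivative_normSq hlam he hq m]
    ring
  have hp2 : L (p ^ 2) = u * q := by
    rw [hp, h.chain_normSq hlam, ← hS]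
    refine Finset.sum_congr rfl fun i _ => ?_
    rw [hratio i]
    ring
  have hcross : L (derivative p * derivative (geg lam (2 * m + e))) = u * q := by
    rw [hp, h.derivative_chain_mul hlam e a le_rfl, hS]
  have hp_pos : 0 < L (p ^ 2) := by
    rw [hp2, ← hS]
    refine Finset.sum_pos (fun i _ => ?_) ⟨0, by simp⟩
    rw [hratio i]
    exact mul_pos (hpos i) (mul_pos (hpos i) (h.normSq_pos hlam _))
  refine ⟨p, ?_, ?_, ?_⟩
  · rintro h0
    simp [h0] at hp_pos
  · refine natDegree_sum_le_of_forall_le _ _ fun i hi => ?_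
    refine (natDegree_C_mul_le _ _).trans ((natDegree_geg_le _ _).trans ?_)
    have := Finset.mem_range.1 hi
    omega
  · have hn := h.sq_nonneg (derivative p - C q * derivative (geg lam (2 * m + e)))
    have e1 : (derivative p - C q * derivative (geg lam (2 * m + e))) ^ 2 =
        derivative p ^ 2 - C (2 * q) * (derivative p * derivative (geg lam (2 * m + e))) +
          C (q ^ 2) * derivative (geg lam (2 * m + e)) ^ 2 := by
      simp only [C_mul, C_pow, map_ofNat]
      ring
    rw [e1, map_add, map_sub, map_C_mul, map_C_mul, hcross] at hn
    rw [hp2]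
    linarith

theorem markov_lower (h : IsGegenbauerFunctional lam L) (hlam : -(1 / 2 : ℝ) < lam) {n : ℕ}
    (hn : 1 ≤ n) : ∃ p : ℝ[X], p ≠ 0 ∧ p.natDegree ≤ n ∧
      gegQuotient lam n * L (p ^ 2) ≤ L (derivative p ^ 2) := by
  rcases Nat.even_or_odd' n with ⟨m, rfl | rfl⟩
  · obtain ⟨k, rfl⟩ : ∃ k, m = k + 1 := ⟨m - 1, by omega⟩
    exact h.markov_lower_chain hlam one_le_two (by simpa using gegQuotient_two hlam) k
  · exact h.markov_lower_chain hlam le_rfl (by simpa using gegQuotient_one hlam) m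

end IsGegenbauerFunctional

theorem sqrt_traceMajorant_lt {lam : ℝ} (hlam : -(1 / 2 : ℝ) < lam) (n : ℕ) :
    √(traceMajorant lam n) <
      ((n : ℝ) + lam + max 0 lam + 2) ^ 4 / (2 * (2 * lam + 1) * √(2 * lam + 5)) := by
  have h1 : 0 < 2 * lam + 1 := by linarith
  have h5 : 0 < 2 * lam + 5 := by linarith
  have hn : (0 : ℝ) ≤ n := n.cast_nonneg
  have hN : 0 < (n : ℝ) + lam + 2 := by linarith
  have hmax : (n : ℝ) + lam + 2 ≤ n + lam + max 0 lam + 2 := by linarith [le_max_left 0 lam]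
  have hs := Real.sqrt_pos.2 h5
  rw [Real.sqrt_lt' (by have := hN.trans_le hmax; positivity)]
  have e : (((n : ℝ) + lam + max 0 lam + 2) ^ 4 / (2 * (2 * lam + 1) * √(2 * lam + 5))) ^ 2 =
      ((n : ℝ) + lam + max 0 lam + 2) ^ 8 / (4 * (2 * lam + 1) ^ 2 * (2 * lam + 5)) := by
    rw [div_pow, mul_pow, Real.sq_sqrt h5.le]
    ring
  rw [e, traceMajorant]
  have hl : 0 < (lam + 1) ^ 8 := pow_pos (by linarith) 8
  have hp : ((n : ℝ) + lam + 2) ^ 8 ≤ (n + lam + max 0 lam + 2) ^ 8 := by gcongr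
  gcongr
  linarith

theorem markov_bounds_all_lambda (lam : ℝ) (hlam : -(1/2 : ℝ) < lam) (n : ℕ) (hn : 3 ≤ n) :
    ((n : ℝ) + lam)^2 * ((n : ℝ) + 2 * min 0 lam)^2 / ((2*lam + 1) * (2*lam + 5))
      < (markovConst lam n)^2 ∧
    (markovConst lam n)^2
      < ((n : ℝ) + lam + max 0 lam + 2)^4 / (2 * (2*lam + 1) * Real.sqrt (2*lam + 5)) := by
  obtain ⟨L, hL, h⟩ := exists_gegenbauerFunctional hlam
  have hnorm : ∀ p : ℝ[X], gegNorm lam (fun x => p.eval x) = √(L (p ^ 2)) := fun p => by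
    rw [gegNorm, hL, Real.sqrt_eq_rpow]
    simp only [eval_pow]
  have hn3 : (3 : ℝ) ≤ n := by exact_mod_cast hn
  set β := √(traceMajorant lam n) with hβ
  have hupper : ∀ p : ℝ[X], p ≠ 0 → p.natDegree ≤ n →
      gegNorm lam (fun x => (derivative p).eval x) / gegNorm lam (fun x => p.eval x) ≤ √β := by
    intro p hp0 hp
    have hpos := h.pos p hp0
    rw [hnorm, hnorm, div_le_iff₀ (Real.sqrt_pos.2 hpos), ← Real.sqrt_mul (Real.sqrt_nonneg _)]
    exact Real.sqrt_le_sqrt (h.markov_upper hlam hp)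
  obtain ⟨p, hp0, hpn, hp⟩ := h.markov_lower hlam (n := n) (by omega)
  have hpos := h.pos p hp0
  have hlt := lower_lt_gegQuotient hlam hn3
  have hle : √(gegQuotient lam n) ≤ markovConst lam n := by
    refine le_trans ?_ (le_csSup ⟨√β, ?_⟩ ⟨p, hp0, hpn, rfl⟩)
    · rw [hnorm, hnorm, ← Real.sqrt_div' _ hpos.le]
      exact Real.sqrt_le_sqrt ((le_div_iff₀ hpos).2 hp)
    · rintro r ⟨p, hp0, hpn, rfl⟩
      exact hupper p hp0 hpn
  have hge : markovConst lam n ≤ √β := by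
    refine csSup_le ⟨_, p, hp0, hpn, rfl⟩ ?_
    rintro r ⟨p, hp0, hpn, rfl⟩
    exact hupper p hp0 hpn
  refine ⟨hlt.trans_le ?_, lt_of_le_of_lt ?_ (sqrt_traceMajorant_lt hlam n)⟩
  · exact (Real.sqrt_le_left ((Real.sqrt_nonneg _).trans hle)).1 hle
  · exact (Real.le_sqrt ((Real.sqrt_nonneg _).trans hle) (Real.sqrt_nonneg _)).1 hge
end
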